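/- (Ancona) Let Γ be a non-elementary hyperbolic group and μ a finitely supported symmetric probability measure whose support generates Γ. Then the Martin boundary of the random walk is homeomorphic to the hyperbolic (Gromov) boundary of Γ. -/

import Mathlib

open Filter MeasureTheory Topology Metric Set
open scoped ENNReal

noncomputable section

namespace GHM

/-! ### Coarse geometry of distance functions -/

/-- The Gromov product `(x|y)_w` of `x` and `y` seen from `w`, for a distance function `d`. -/
def gromov {X : Type*} (d : X → X → ℝ) (w x y : X) : ℝ :=
  (d x w + d y w - d x y) / 2

/-- `d` is `δ`-hyperbolic (four point condition on Gromov products). -/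
def IsHyperbolicWith {X : Type*} (d : X → X → ℝ) (δ : ℝ) : Prop :=
  ∀ w x y z : X, min (gromov d w x y) (gromov d w x z) - δ ≤ gromov d w y z

/-- `d` is Gromov hyperbolic. -/
def IsHyperbolic {X : Type*} (d : X → X → ℝ) : Prop :=
  ∃ δ : ℝ, 0 ≤ δ ∧ IsHyperbolicWith d δ

/-- `d` is a genuine metric. -/
structure IsMetricFun {X : Type*} (d : X → X → ℝ) : Prop where
  refl : ∀ x, d x x = 0
  pos : ∀ x y, x ≠ y → 0 < d x y
  symm : ∀ x y, d x y = d y x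
  triangle : ∀ x y z, d x z ≤ d x y + d y z

/-- `f` is a `(Λ,c)`-quasi-isometric embedding from `(X,dX)` to `(Y,dY)`. -/
def QIEmbed {X Y : Type*} (dX : X → X → ℝ) (dY : Y → Y → ℝ)
    (f : X → Y) (Λ c : ℝ) : Prop :=
  ∀ x x' : X, dX x x' / Λ - c ≤ dY (f x) (f x') ∧ dY (f x) (f x') ≤ Λ * dX x x' + c

/-- `(X,dX)` and `(Y,dY)` are quasi-isometric. -/
def QuasiIsometric {X Y : Type*} (dX : X → X → ℝ) (dY : Y → Y → ℝ) : Prop :=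
  ∃ (f : X → Y) (Λ c C : ℝ), 1 ≤ Λ ∧ 0 ≤ c ∧ 0 ≤ C ∧
    QIEmbed dX dY f Λ c ∧ ∀ y : Y, ∃ x : X, dY (f x) y ≤ C

variable {G : Type*} [Group G]

/-- Word length of `g` with respect to the (symmetrized) finite set `S`. -/
def wordLength (S : Finset G) (g : G) : ℕ :=
  sInf {n : ℕ | ∃ l : List G, l.length = n ∧ (∀ a ∈ l, a ∈ S ∨ a⁻¹ ∈ S) ∧ l.prod = g}

/-- The word metric associated with a finite generating set `S`. -/
def wordDist (S : Finset G) (x y : G) : ℝ := wordLength S (x⁻¹ * y)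

/-- `S` generates the group. -/
def Generates (S : Finset G) : Prop := Subgroup.closure (S : Set G) = ⊤

/-- The standard metric on `ℤ`. -/
def intDist (m n : ℤ) : ℝ := |(m : ℝ) - (n : ℝ)|

/-- `G` is a non-elementary hyperbolic group: finitely generated, its word metrics are
Gromov hyperbolic, it is infinite, and it is not quasi-isometric to `ℤ`. -/
def NonElemHyperbolic (G : Type*) [Group G] : Prop :=
  Infinite G ∧ (∃ S : Finset G, Generates S) ∧
    ∀ S : Finset G, Generates S →
      IsHyperbolic (wordDist S) ∧ ¬ QuasiIsometric (wordDist S) intDist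

/-- `d` is invariant under left translations. -/
def LeftInvariant (d : G → G → ℝ) : Prop := ∀ g x y : G, d (g * x) (g * y) = d x y

/-- `d` belongs to the class `𝒟(Γ)`: it is a left-invariant Gromov hyperbolic metric on the
group, quasi-isometric to a word metric of a finite generating set. -/
def MemD (d : G → G → ℝ) : Prop :=
  IsMetricFun d ∧ LeftInvariant d ∧ IsHyperbolic d ∧
    ∃ S : Finset G, Generates S ∧ QuasiIsometric d (wordDist S)

/-! ### Random walks -/

/-- `μ` is (the density of) a probability measure on the (countable) group. -/
def IsProbDensity (μ : G → ℝ) : Prop := (∀ g, 0 ≤ μ g) ∧ HasSum μ 1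

/-- `μ` is symmetric. -/
def IsSymmetric (μ : G → ℝ) : Prop := ∀ g : G, μ g⁻¹ = μ g

/-- The support of `μ` generates `G`. -/
def GeneratesSupp (μ : G → ℝ) : Prop := Subgroup.closure {g : G | μ g ≠ 0} = ⊤

open scoped Classical in
/-- Convolution powers `μ^n` of `μ`. -/
def convPow (μ : G → ℝ) : ℕ → G → ℝ
  | 0 => fun g => if g = 1 then 1 else 0
  | n + 1 => fun g => ∑' y : G, convPow μ n y * μ (y⁻¹ * g)

/-- The Green function `G(x,y) = ∑_n μ^n(x⁻¹y)`. -/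
def greenFn (μ : G → ℝ) (x y : G) : ℝ := ∑' n : ℕ, convPow μ n (x⁻¹ * y)

/-- The random walk is transient, i.e. `G(e,e) = ∑_n μ^n(e) < ∞`. -/
def Transient (μ : G → ℝ) : Prop := Summable fun n : ℕ => convPow μ n (1 : G)

/-- Successive positions of a walk started at `x` with increments `l`. -/
def walkPositions (x : G) (l : List G) : List G := l.scanl (fun p a => p * a) x

/-- The increments `l` describe a trajectory from `x` which hits `y` for the first time at
its final position. -/
def IsFirstHitPath (x y : G) (l : List G) : Prop :=
  (walkPositions x l).getLast? = some y ∧ y ∉ (walkPositions x l).dropLast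

/-- `F(x,y)`: the probability that the `μ`-random walk started at `x` ever hits `y`. -/
def hitProb (μ : G → ℝ) (x y : G) : ℝ :=
  ∑' l : {l : List G // IsFirstHitPath x y l}, ((l : List G).map μ).prod

/-- The Green metric `d_G(x,y) = - log F(x,y)`. -/
def greenDist (μ : G → ℝ) (x y : G) : ℝ := - Real.log (hitProb μ x y)

/-- `μ` has a finite first moment with respect to `d`. -/
def FiniteFirstMoment (d : G → G → ℝ) (μ : G → ℝ) : Prop :=
  Summable fun g : G => d 1 g * μ g

/-- `μ` has an exponential moment with respect to `d`. -/
def HasExpMoment (d : G → G → ℝ) (μ : G → ℝ) : Prop :=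
  ∃ lam : ℝ, 0 < lam ∧ Summable fun g : G => Real.exp (lam * d 1 g) * μ g

/-- The entropy `H(μ^n) = -∑_γ μ^n(γ) log μ^n(γ)` of the `n`-th convolution power. -/
def entropyAt (μ : G → ℝ) (n : ℕ) : ℝ :=
  - ∑' g : G, convPow μ n g * Real.log (convPow μ n g)

/-- `h` is the asymptotic entropy of the walk. -/
def HasEntropy (μ : G → ℝ) (h : ℝ) : Prop :=
  Tendsto (fun n : ℕ => entropyAt μ n / n) atTop (𝓝 h)

/-- `v` is the logarithmic volume growth of `(G,d)` (seen from the identity). -/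
def HasGrowth (d : G → G → ℝ) (v : ℝ) : Prop :=
  Filter.limsup (fun R : ℝ => Real.log (Nat.card {g : G // d 1 g ≤ R}) / R) atTop = v

/-- The position `Z_n = ω_0 ω_1 ⋯ ω_{n-1}` of the random walk at time `n`, given the
sequence of increments `ω`. -/
def walkPos (n : ℕ) (ω : ℕ → G) : G := ((List.range n).map ω).prod

/-- `P` is the law on the space of increment sequences of an i.i.d. sequence of law `μ`:
cylinders have product measure.  (This characterizes the path measure of the random walk.) -/
def IsWalkMeasure [MeasurableSpace G] (μ : G → ℝ) (P : Measure (ℕ → G)) : Prop :=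
  IsProbabilityMeasure P ∧
    ∀ (n : ℕ) (g : Fin n → G),
      P {ω : ℕ → G | ∀ i : Fin n, ω (i : ℕ) = g i} = ∏ i : Fin n, ENNReal.ofReal (μ (g i))

/-! ### The Gromov boundary, visual metrics, harmonic and quasiconformal measures -/

/-- A sequence tends to infinity if Gromov products (at the base point `1`) go to `∞`. -/
def TendstoInfinity (d : G → G → ℝ) (u : ℕ → G) : Prop :=
  Tendsto (fun p : ℕ × ℕ => gromov d 1 (u p.1) (u p.2)) atTop atTop

/-- A realization of the Gromov boundary of `(G,d)` as an abstract type `B`: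
`conv u b` means that the sequence `u` converges at infinity to the boundary point `b`.
The group acts on its boundary by `smul`. -/
structure BoundaryData (G : Type*) [Group G] (d : G → G → ℝ) (B : Type*) where
  conv : (ℕ → G) → B → Prop
  smul : G → B → B
  conv_unique : ∀ u b b', conv u b → conv u b' → b = b'
  exists_conv : ∀ u, TendstoInfinity d u → ∃ b, conv u b
  conv_tendstoInfinity : ∀ u b, conv u b → TendstoInfinity d u
  conv_iff : ∀ u v b, conv u b →
    (conv v b ↔ Tendsto (fun n => gromov d 1 (u n) (v n)) atTop atTop)
  conv_surj : ∀ b, ∃ u, conv u b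
  smul_conv : ∀ (γ : G) (u) (b), conv u b → conv (fun n => γ * u n) (smul γ b)

/-- Asymptotic Gromov product of two sequences. -/
def seqGromov (d : G → G → ℝ) (u v : ℕ → G) : ℝ :=
  Filter.liminf (fun n => gromov d 1 (u n) (v n)) atTop

/-- The metric of `B` is a visual metric of parameter `ε` (with comparison constant `C`)
for the hyperbolic distance `d` on the group:  `dist(a,b) ≍ exp(-ε (a|b))`. -/
def IsVisualMetric {B : Type*} [MetricSpace B] (d : G → G → ℝ)
    (bd : BoundaryData G d B) (ε C : ℝ) : Prop :=
  0 < ε ∧ 0 < C ∧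
    ∀ u v b b', bd.conv u b → bd.conv v b' → b ≠ b' →
      dist b b' ≤ C * Real.exp (-ε * seqGromov d u v) ∧
      Real.exp (-ε * seqGromov d u v) ≤ C * dist b b'

/-- `ν` is the harmonic measure of the random walk of law `μ` on the boundary `B`:
it is the law of the almost sure limit `Z_∞` of the walk on the boundary. -/
def IsHarmonicMeasure {B : Type*} [MeasurableSpace G] [MeasurableSpace B]
    (d : G → G → ℝ) (bd : BoundaryData G d B) (μ : G → ℝ)
    (P : Measure (ℕ → G)) (ν : Measure B) : Prop :=
  IsWalkMeasure μ P ∧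
    ∃ Zinf : (ℕ → G) → B, Measurable Zinf ∧
      (∀ᵐ ω ∂P, bd.conv (fun n => walkPos n ω) (Zinf ω)) ∧ ν = P.map Zinf

/-- Busemann function `β_b(x,y)` of the boundary point `b`. -/
def busemann {B : Type*} (d : G → G → ℝ) (bd : BoundaryData G d B)
    (x y : G) (b : B) : ℝ :=
  sSup {t : ℝ | ∃ u, bd.conv u b ∧
    t = Filter.limsup (fun n => d x (u n) - d y (u n)) atTop}

/-- The image measure `γ^*ρ`, `γ^*ρ(A) = ρ(γA)`. -/
def actPush {B : Type*} [MeasurableSpace B] {d : G → G → ℝ}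
    (bd : BoundaryData G d B) (γ : G) (ρ : Measure B) : Measure B :=
  ρ.map (bd.smul γ⁻¹)

/-- `ρ` is a quasiconformal measure on the boundary for `(G,d)` of logarithmic growth
parameter `v`: `γ^*ρ` and `ρ` are mutually absolutely continuous, with density
`dγ^*ρ/dρ ≍ exp (v β_b(1,γ⁻¹))` (uniformly in `γ`). -/
def IsQuasiconformalMeasure {B : Type*} [MeasurableSpace B] {d : G → G → ℝ}
    (bd : BoundaryData G d B) (ρ : Measure B) (v : ℝ) : Prop :=
  ∃ C : ℝ, 0 < C ∧ ∀ γ : G,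
    actPush bd γ ρ ≪ ρ ∧ ρ ≪ actPush bd γ ρ ∧
      ∀ᵐ b ∂ρ,
        (actPush bd γ ρ).rnDeriv ρ b
            ≤ ENNReal.ofReal (C * Real.exp (v * busemann d bd 1 γ⁻¹ b)) ∧
        ENNReal.ofReal (C⁻¹ * Real.exp (v * busemann d bd 1 γ⁻¹ b))
            ≤ (actPush bd γ ρ).rnDeriv ρ b

/-- `ν` is Ahlfors regular of dimension `α`: `ν(B(b,r)) ≍ r^α`. -/
def AhlforsRegularOfDim {B : Type*} [MetricSpace B] [MeasurableSpace B]
    (ν : Measure B) (α : ℝ) : Prop :=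
  ∃ C : ℝ, 0 < C ∧ ∀ (b : B) (r : ℝ), 0 < r → r ≤ Metric.diam (Set.univ : Set B) →
    ENNReal.ofReal (C⁻¹ * r ^ α) ≤ ν (Metric.ball b r) ∧
      ν (Metric.ball b r) ≤ ENNReal.ofReal (C * r ^ α)

/-- The Hausdorff dimension of a measure: the infimum of the Hausdorff dimensions of sets of
full measure. -/
def measureDim {B : Type*} [EMetricSpace B] [MeasurableSpace B] (ν : Measure B) : ℝ≥0∞ :=
  ⨅ (A : Set B) (_ : ν Aᶜ = 0), dimH A

/-! ### Word geodesics -/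

/-- `p 0, …, p n` is a geodesic segment for the word metric of `S`. -/
def IsWordGeodesic (S : Finset G) (n : ℕ) (p : ℕ → G) : Prop :=
  ∀ i j : ℕ, i ≤ n → j ≤ n → wordDist S (p i) (p j) = |(i : ℝ) - (j : ℝ)|

/-- `v` lies within distance `r` of some word geodesic segment from `x` to `y`. -/
def NearWordGeodesic (S : Finset G) (x y v : G) (r : ℝ) : Prop :=
  ∃ (n : ℕ) (p : ℕ → G), IsWordGeodesic S n p ∧ p 0 = x ∧ p n = y ∧
    ∃ i ≤ n, wordDist S v (p i) ≤ r

/-! ### Martin boundary -/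

/-- The Martin kernel `K(x,y) = G(x,y)/G(e,y)`. -/
def martinKernel (μ : G → ℝ) (x y : G) : ℝ := greenFn μ x y / greenFn μ 1 y

/-- The embedding `y ↦ K(·,y)` of the group in `C(G)` (pointwise topology). -/
def martinMap (μ : G → ℝ) (y : G) : G → ℝ := fun x => martinKernel μ x y

/-- The Martin boundary: the boundary of the image of the group under the Martin embedding
in the space of functions with the topology of pointwise convergence. -/
def martinBoundary (μ : G → ℝ) : Set (G → ℝ) :=
  closure (Set.range (martinMap μ)) \ Set.range (martinMap μ)

/-- `h` is a `μ`-harmonic function. -/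
def IsHarmonicFn (μ : G → ℝ) (h : G → ℝ) : Prop :=
  ∀ x : G, h x = ∑' y : G, h y * μ (x⁻¹ * y)

/-- `h` is a minimal positive harmonic function. -/
def IsMinimalHarmonic (μ : G → ℝ) (h : G → ℝ) : Prop :=
  IsHarmonicFn μ h ∧ (∀ x, 0 < h x) ∧
    ∀ u : G → ℝ, IsHarmonicFn μ u → (∀ x, 0 ≤ u x) → (∀ x, u x ≤ h x) →
      ∃ c : ℝ, u = fun x => c * h x

/-! ### Metric space versions (geodesic and quasiruled spaces) -/

/-- A geodesic metric space. -/
def IsGeodesicSpace (X : Type*) [MetricSpace X] : Prop :=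
  ∀ x y : X, ∃ f : ℝ → X, f 0 = x ∧ f (dist x y) = y ∧
    ∀ s ∈ Set.Icc (0:ℝ) (dist x y), ∀ t ∈ Set.Icc (0:ℝ) (dist x y),
      dist (f s) (f t) = |s - t|

/-- `f : [a,b] → Y` is a `(Λ,c)`-quasigeodesic segment. -/
def IsQuasigeodesicOn {Y : Type*} [MetricSpace Y] (f : ℝ → Y) (a b Λ c : ℝ) : Prop :=
  ∀ s ∈ Set.Icc a b, ∀ t ∈ Set.Icc a b,
    |s - t| / Λ - c ≤ dist (f s) (f t) ∧ dist (f s) (f t) ≤ Λ * |s - t| + c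

/-- `f : [a,b] → Y` is a `τ`-quasiruler: Gromov products of triples along it are `≤ τ`. -/
def IsQuasirulerOn {Y : Type*} [MetricSpace Y] (f : ℝ → Y) (a b τ : ℝ) : Prop :=
  ∀ s t u : ℝ, s ∈ Set.Icc a b → t ∈ Set.Icc a b → u ∈ Set.Icc a b → s ≤ t → t ≤ u →
    dist (f s) (f t) + dist (f t) (f u) ≤ dist (f s) (f u) + 2 * τ

/-- A quasiruled metric space: for some constants `(Λ,c,τ)` every pair of points is joined
by a `(Λ,c)`-quasigeodesic, and every `(Λ,c)`-quasigeodesic is a `τ`-quasiruler. -/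
def Quasiruled (Y : Type*) [MetricSpace Y] : Prop :=
  ∃ Λ c τ : ℝ, 1 ≤ Λ ∧ 0 ≤ c ∧ 0 ≤ τ ∧
    (∀ x y : Y, ∃ (a b : ℝ) (f : ℝ → Y), a ≤ b ∧ f a = x ∧ f b = y ∧
      IsQuasigeodesicOn f a b Λ c) ∧
    ∀ (f : ℝ → Y) (a b : ℝ), IsQuasigeodesicOn f a b Λ c → IsQuasirulerOn f a b τ

/-- A metric space is hyperbolic. -/
def HypSpace (Y : Type*) [MetricSpace Y] : Prop :=
  IsHyperbolic (fun x y : Y => dist x y)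

/-- `f` is a quasi-isometry between metric spaces. -/
def MetricQI {X Y : Type*} [MetricSpace X] [MetricSpace Y] (f : X → Y) : Prop :=
  ∃ Λ c C : ℝ, 1 ≤ Λ ∧ 0 ≤ c ∧ 0 ≤ C ∧
    QIEmbed (fun a b : X => dist a b) (fun a b : Y => dist a b) f Λ c ∧
    ∀ y : Y, ∃ x : X, dist (f x) y ≤ C

/-!
A hyperbolic group which is not quasi-isometric to `ℤ` branches: at a suitable distance from any
point there are many points further away from `1`, while every point is reached in this way from
boundedly many others only.  This forces a spectral gap for the Markov operator on `ℓ²`, so the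
convolution powers `μ^n` decay exponentially.

Ancona's inequality `G(x,y) ≤ A G(x,w) G(w,y)`, for `w` with bounded Gromov product `(x|y)_w`, is
obtained by summing over trajectories from `x` to `y`.  Frink's metrization lemma for the visual
quasi-metric based at `w` bounds `∑ exp(-ε d(w, z))` from below, where `z` runs over the positions
of the trajectory.  So, for any `A`, there is `n` such that every trajectory spends, for some `m`,
more than `A (m - n)` steps between two visits to the ball of radius `m` around `w`.  For large `A`,
the decay of `μ^n` over such a long excursion pays both for the number of points in the ball and for
moving the endpoints of the excursion to `w` by Harnack's inequality.

Ancona's inequality makes every limit of Martin kernels towards a given boundary point minimal and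
makes any two such limits comparable, hence equal.  So the Martin map extends continuously to the
Gromov boundary.  The extension is injective because the kernel at `b` grows like `1 / G(·,1)` along
a ray towards `b`, whereas the kernels at the other points stay below a multiple of `G(·,1)` there.
-/

/-! ### Gromov products -/

section GromovProduct

variable {X : Type*} {d : X → X → ℝ} {δ : ℝ} {w x y z : X}

namespace IsMetricFun

theorem nonneg (hd : IsMetricFun d) (x y : X) : 0 ≤ d x y := by
  linarith [hd.triangle x y x, hd.refl x, hd.symm x y]

theorem gromov_comm (hd : IsMetricFun d) (w x y : X) : gromov d w x y = gromov d w y x := by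
  simp only [gromov, hd.symm x y, add_comm (d x w)]

theorem gromov_nonneg (hd : IsMetricFun d) (w x y : X) : 0 ≤ gromov d w x y := by
  simp only [gromov]
  linarith [hd.triangle x w y, hd.symm w y]

theorem gromov_le_left (hd : IsMetricFun d) (w x y : X) : gromov d w x y ≤ d x w := by
  simp only [gromov]
  linarith [hd.triangle y x w, hd.symm x y]

theorem gromov_le_right (hd : IsMetricFun d) (w x y : X) : gromov d w x y ≤ d y w :=
  hd.gromov_comm w x y ▸ hd.gromov_le_left w y x

theorem gromov_self (hd : IsMetricFun d) (w x : X) : gromov d w x x = d x w := by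
  simp [gromov, hd.refl]

theorem gromov_add_gromov (hd : IsMetricFun d) (w x y : X) :
    gromov d w x y + gromov d x w y = d x w := by
  simp only [gromov, hd.symm w x, hd.symm w y, hd.symm x y]
  ring

theorem gromov_le_gromov_add_dist (hd : IsMetricFun d) (w x y z : X) :
    gromov d w x y ≤ gromov d z x y + d w z := by
  simp only [gromov]
  linarith [hd.triangle x z w, hd.triangle y z w, hd.symm z w]

theorem gromov_le_gromov_of_between (hd : IsMetricFun d) (x : X) (h : d y w + d z y = d z w) :
    gromov d w x y ≤ gromov d w x z := by
  simp only [gromov]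
  linarith [hd.triangle x y z, hd.symm y z]

theorem gromov_eq_of_between (hd : IsMetricFun d) (h : d y w + d z y = d z w) :
    gromov d w y z = d y w := by
  simp only [gromov, hd.symm y z]
  linarith

end IsMetricFun

namespace IsHyperbolicWith

theorem nonneg (hδ : IsHyperbolicWith d δ) (x : X) : 0 ≤ δ := by
  linarith [hδ x x x x, min_self (gromov d x x x)]

theorem sub_le_gromov (hδ : IsHyperbolicWith d δ) {r : ℝ} (hy : r ≤ gromov d w x y)
    (hz : r ≤ gromov d w x z) : r - δ ≤ gromov d w y z := by
  linarith [hδ w x y z, le_min hy hz]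

theorem gromov_le_of_lt {t : ℝ} (hδ : IsHyperbolicWith d δ) (hyz : gromov d w y z ≤ t)
    (hxy : t + δ < gromov d w x y) : gromov d w x z ≤ t + δ := by
  by_contra! hxz
  linarith [hδ w x y z, lt_min hxy hxz]

end IsHyperbolicWith

theorem LeftInvariant.gromov_mul_left {d : G → G → ℝ} (hd : LeftInvariant d) (g w x y : G) :
    gromov d (g * w) (g * x) (g * y) = gromov d w x y := by
  simp only [gromov, hd g]

end GromovProduct

/-! ### The word metric -/

section WordMetric

variable {S : Finset G}

theorem wordLength_prod_le {l : List G} (hl : ∀ a ∈ l, a ∈ S ∨ a⁻¹ ∈ S) :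
    wordLength S l.prod ≤ l.length :=
  Nat.sInf_le ⟨l, rfl, hl, rfl⟩

theorem wordLength_one (S : Finset G) : wordLength S (1 : G) = 0 := by
  simpa using wordLength_prod_le (S := S) (l := []) (by simp)

namespace Generates

theorem exists_list_length_eq (hS : Generates S) (g : G) :
    ∃ l : List G, l.length = wordLength S g ∧ (∀ a ∈ l, a ∈ S ∨ a⁻¹ ∈ S) ∧ l.prod = g := by
  have hg : g ∈ Subgroup.closure (S : Set G) := by rw [hS]; trivial
  rw [← Subgroup.mem_toSubmonoid, Subgroup.closure_toSubmonoid] at hg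
  obtain ⟨l, hl, hprod⟩ := Submonoid.exists_list_of_mem_closure hg
  exact Nat.sInf_mem (s := {n | ∃ l : List G, l.length = n ∧ (∀ a ∈ l, a ∈ S ∨ a⁻¹ ∈ S) ∧
    l.prod = g}) ⟨l.length, l, rfl, by simpa using hl, hprod⟩

theorem wordLength_mul_le (hS : Generates S) (g h : G) :
    wordLength S (g * h) ≤ wordLength S g + wordLength S h := by
  obtain ⟨l, hlen, hl, rfl⟩ := hS.exists_list_length_eq g
  obtain ⟨m, hmlen, hm, rfl⟩ := hS.exists_list_length_eq h
  rw [← hlen, ← hmlen, ← List.prod_append, ← List.length_append]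
  exact wordLength_prod_le fun a ha => (List.mem_append.1 ha).elim (hl a) (hm a)

theorem wordLength_inv (hS : Generates S) (g : G) : wordLength S g⁻¹ = wordLength S g := by
  suffices h : ∀ g, wordLength S g⁻¹ ≤ wordLength S g from
    (h g).antisymm (by simpa using h g⁻¹)
  intro g
  obtain ⟨l, hlen, hl, rfl⟩ := hS.exists_list_length_eq g
  rw [← hlen, List.prod_inv_reverse, ← List.length_map (·⁻¹), ← List.length_reverse]
  refine wordLength_prod_le fun a ha => ?_
  simp only [List.mem_reverse, List.mem_map] at ha
  obtain ⟨b, hb, rfl⟩ := ha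
  simpa [or_comm] using hl b hb

theorem wordLength_eq_zero (hS : Generates S) {g : G} : wordLength S g = 0 ↔ g = 1 := by
  refine ⟨fun h => ?_, fun h => h ▸ wordLength_one S⟩
  obtain ⟨l, hlen, -, rfl⟩ := hS.exists_list_length_eq g
  rw [List.length_eq_zero_iff.1 (hlen.trans h), List.prod_nil]

theorem isMetricFun_wordDist (hS : Generates S) : IsMetricFun (wordDist S) where
  refl x := by simp [wordDist, wordLength_one]
  pos x y hxy := by
    rw [wordDist, Nat.cast_pos, Nat.pos_iff_ne_zero, Ne, hS.wordLength_eq_zero, inv_mul_eq_one]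
    exact hxy
  symm x y := by rw [wordDist, wordDist, ← hS.wordLength_inv]; simp
  triangle x y z := by
    simp only [wordDist]
    have := hS.wordLength_mul_le (x⁻¹ * y) (y⁻¹ * z)
    rw [show x⁻¹ * y * (y⁻¹ * z) = x⁻¹ * z by group] at this
    exact_mod_cast this

theorem wordDist_one_right (hS : Generates S) (g : G) : wordDist S g 1 = wordLength S g := by
  rw [wordDist, mul_one, hS.wordLength_inv]

end Generates

theorem leftInvariant_wordDist (S : Finset G) : LeftInvariant (wordDist S) := fun g x y => by
  simp [wordDist, mul_assoc]

theorem wordDist_self_mul (S : Finset G) (x g : G) : wordDist S x (x * g) = wordLength S g := by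
  simp [wordDist]

theorem Generates.wordDist_mul_self (hS : Generates S) (x g : G) :
    wordDist S (x * g) x = wordLength S g := by
  rw [hS.isMetricFun_wordDist.symm, wordDist_self_mul]

namespace Generates

theorem exists_geodesic (hS : Generates S) (g : G) :
    ∃ p : ℕ → G, p 0 = 1 ∧ p (wordLength S g) = g ∧
      ∀ i j, i ≤ j → j ≤ wordLength S g → wordLength S ((p i)⁻¹ * p j) = j - i := by
  obtain ⟨l, hlen, hl, hprod⟩ := hS.exists_list_length_eq g
  set p : ℕ → G := fun i => (l.take i).prod
  have hp₀ : p 0 = 1 := by simp [p]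
  have hp₁ : p (wordLength S g) = g := by simp [p, ← hlen, hprod]
  have hle : ∀ i j, i ≤ j → wordLength S ((p i)⁻¹ * p j) ≤ j - i := by
    intro i j hij
    have htake : (p i)⁻¹ * p j = ((l.take j).drop i).prod := by
      have := List.prod_take_mul_prod_drop (l.take j) i
      rw [List.take_take, min_eq_left hij] at this
      exact inv_mul_eq_iff_eq_mul.2 this.symm
    rw [htake]
    refine (wordLength_prod_le fun a ha => hl a ?_).trans (by simp; omega)
    exact List.mem_of_mem_take (List.mem_of_mem_drop ha)
  refine ⟨p, hp₀, hp₁, fun i j hij hj => (hle i j hij).antisymm ?_⟩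
  have h₀ := hle 0 i (Nat.zero_le _)
  have h₁ := hle j _ hj
  have h₂ := hS.wordLength_mul_le (p i * ((p i)⁻¹ * p j)) ((p j)⁻¹ * g)
  have h₃ := hS.wordLength_mul_le (p i) ((p i)⁻¹ * p j)
  rw [hp₀, inv_one, one_mul] at h₀
  rw [hp₁] at h₁
  rw [show p i * ((p i)⁻¹ * p j) * ((p j)⁻¹ * g) = g by group] at h₂
  omega

theorem exists_between (hS : Generates S) {g : G} {k : ℕ} (hk : k ≤ wordLength S g) :
    ∃ h : G, wordLength S h = k ∧ wordDist S h 1 + wordDist S g h = wordDist S g 1 := by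
  obtain ⟨p, hp₀, hp₁, hp⟩ := hS.exists_geodesic g
  have h₀ := hp 0 k (Nat.zero_le _) hk
  have h₁ := hp k _ hk le_rfl
  rw [hp₀, inv_one, one_mul, Nat.sub_zero] at h₀
  rw [hp₁] at h₁
  refine ⟨p k, h₀, ?_⟩
  rw [hS.wordDist_one_right, hS.wordDist_one_right, hS.isMetricFun_wordDist.symm g, wordDist, h₀,
    h₁, Nat.cast_sub hk]
  ring

end Generates

open scoped Classical Pointwise in
theorem Generates.exists_pow_card_bound (hS : Generates S) :
    ∃ β : ℕ, 1 ≤ β ∧ ∀ m : ℕ, {g : G | wordLength S g ≤ m}.Finite ∧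
      {g : G | wordLength S g ≤ m}.ncard ≤ β ^ m := by
  set T : Finset G := insert 1 (S ∪ S⁻¹) with hT
  have hword : ∀ l : List G, (∀ a ∈ l, a ∈ S ∨ a⁻¹ ∈ S) → l.prod ∈ T ^ l.length := by
    intro l hl
    induction l with
    | nil => simp
    | cons a l ih =>
      rw [List.prod_cons, List.length_cons, pow_succ']
      refine Finset.mul_mem_mul ?_ (ih fun b hb => hl b (List.mem_cons_of_mem _ hb))
      simpa [hT] using Or.inr (hl a List.mem_cons_self)
  have hsub : ∀ m, {g : G | wordLength S g ≤ m} ⊆ ↑(T ^ m) := by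
    intro m g hg
    obtain ⟨l, hlen, hl, rfl⟩ := hS.exists_list_length_eq g
    exact Finset.pow_subset_pow_right (by simp [hT]) (hlen.trans_le hg) (hword l hl)
  refine ⟨T.card, Finset.card_pos.2 (Finset.insert_nonempty _ _), fun m =>
    ⟨(T ^ m).finite_toSet.subset (hsub m), ?_⟩⟩
  calc {g : G | wordLength S g ≤ m}.ncard ≤ (T ^ m).card := by
        rw [← Set.ncard_coe_finset]
        exact Set.ncard_le_ncard (hsub m) (Finset.finite_toSet _)
    _ ≤ T.card ^ m := Finset.card_pow_le

theorem Generates.finite_setOf_wordLength_le (hS : Generates S) (m : ℕ) :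
    {g : G | wordLength S g ≤ m}.Finite :=
  let ⟨_, _, hβ⟩ := hS.exists_pow_card_bound
  (hβ m).1

theorem Generates.exists_lt_wordLength [Infinite G] (hS : Generates S) (m : ℕ) :
    ∃ g : G, m < wordLength S g := by
  by_contra! h
  exact Set.infinite_univ ((hS.finite_setOf_wordLength_le m).subset fun g _ => h g)

end WordMetric

/-! ### Branching in a hyperbolic group that is not quasi-isometric to `ℤ` -/

section Branching

variable {S : Finset G} {δ : ℝ} {c : ℕ}

theorem Generates.exists_centered_geodesic [Infinite G] (hS : Generates S) (L : ℕ) :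
    ∃ q : ℤ → G, q 0 = 1 ∧ ∀ i j : ℤ, -L ≤ i → i ≤ j → j ≤ L →
      (wordLength S ((q i)⁻¹ * q j) : ℤ) = j - i := by
  obtain ⟨g, hg⟩ := hS.exists_lt_wordLength (2 * L)
  obtain ⟨p, -, -, hp⟩ := hS.exists_geodesic g
  refine ⟨fun n => (p L)⁻¹ * p (L + n).toNat, by simp, fun i j hi hij hj => ?_⟩
  rw [show ((p L)⁻¹ * p (L + i).toNat)⁻¹ * ((p L)⁻¹ * p (L + j).toNat) =
    (p (L + i).toNat)⁻¹ * p (L + j).toNat by group, hp _ _ (by omega) (by omega)]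
  omega

/-- Centred geodesic segments of length `2L` through `1` converge, along an ultrafilter `L → ∞`,
at each time, because balls are finite. -/
theorem Generates.exists_biinfinite_geodesic [Infinite G] (hS : Generates S) :
    ∃ γ : ℤ → G, ∀ i j, wordDist S (γ i) (γ j) = intDist i j := by
  choose q hq₀ hq using fun L => hS.exists_centered_geodesic L
  have hlim : ∀ n : ℤ, ∃ g : G, ∀ᶠ L in (hyperfilter ℕ : Filter ℕ), q L n = g := by
    intro n
    have hball : ∀ᶠ L in (hyperfilter ℕ : Filter ℕ),
        ∃ g ∈ {g : G | wordLength S g ≤ n.natAbs}, q L n = g := by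
      refine Nat.hyperfilter_le_atTop ?_
      filter_upwards [eventually_ge_atTop n.natAbs] with L hL
      refine ⟨q L n, ?_, rfl⟩
      rcases le_total 0 n with hn | hn
      · have := hq L 0 n (by omega) hn (by omega)
        rw [hq₀, inv_one, one_mul] at this
        change wordLength S (q L n) ≤ _
        omega
      · have := hq L n 0 (by omega) hn (by omega)
        rw [hq₀, mul_one, hS.wordLength_inv] at this
        change wordLength S (q L n) ≤ _
        omega
    obtain ⟨g, -, hg⟩ :=
      (Ultrafilter.eventually_exists_mem_iff (hS.finite_setOf_wordLength_le n.natAbs)).1 hball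
    exact ⟨g, hg⟩
  choose γ hγ using hlim
  have hle : ∀ i j, i ≤ j → wordDist S (γ i) (γ j) = intDist i j := by
    intro i j hij
    have hlarge : ∀ᶠ L : ℕ in (hyperfilter ℕ : Filter ℕ), max i.natAbs j.natAbs ≤ L :=
      Nat.hyperfilter_le_atTop (eventually_ge_atTop _)
    obtain ⟨L, ⟨hi, hj⟩, hL⟩ := (((hγ i).and (hγ j)).and hlarge).exists
    have hlen := hq L i j (by omega) hij (by omega)
    rw [hi, hj] at hlen
    have hij' : (i : ℝ) ≤ j := by exact_mod_cast hij
    rw [wordDist, intDist, abs_sub_comm, abs_of_nonneg (sub_nonneg.2 hij')]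
    exact_mod_cast hlen
  refine ⟨γ, fun i j => (le_total i j).elim (hle i j) fun hji => ?_⟩
  rw [hS.isMetricFun_wordDist.symm, hle j i hji, intDist, intDist, abs_sub_comm]

theorem IsMetricFun.exists_far_of_not_quasiIsometric {X : Type*} {d : X → X → ℝ}
    (hd : IsMetricFun d) (hZ : ¬ QuasiIsometric d intDist) {γ : ℤ → X}
    (hγ : ∀ i j, d (γ i) (γ j) = intDist i j) (r : ℝ) : ∃ z, ∀ n, r < d z (γ n) := by
  by_contra! hnear
  choose f hf using hnear
  have hr : 0 ≤ r := (hd.nonneg _ _).trans (hf (γ 0))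
  refine hZ ⟨f, 1, 2 * r, r, le_rfl, by positivity, hr, fun x y => ?_, fun n => ⟨γ n, ?_⟩⟩
  · rw [← hγ]
    have hx := hf x
    have hy := hf y
    constructor
    · linarith [hd.triangle x (γ (f x)) y, hd.triangle (γ (f x)) (γ (f y)) y,
        hd.symm y (γ (f y))]
    · linarith [hd.triangle (γ (f x)) x (γ (f y)), hd.triangle x y (γ (f y)),
        hd.symm x (γ (f x))]
  · rw [← hγ, hd.symm]
    exact hf (γ n)

theorem IsHyperbolicWith.gromov_le_of_nearest {X : Type*} {d : X → X → ℝ} {p q m z : X}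
    (hd : IsMetricFun d) (hδ : IsHyperbolicWith d δ) (hmq : d m p + d q m = d q p)
    (hm : 2 * δ < d m p) (hz : d z p ≤ d z m) : gromov d p z q ≤ d m p := by
  by_contra! hlt
  have hqm := (hd.gromov_eq_of_between hmq).ge
  rw [hd.gromov_comm] at hqm hlt
  have := hδ.sub_le_gromov hqm hlt.le
  simp only [gromov, hd.symm m z] at this
  linarith

theorem Generates.exists_biinfinite_geodesic_nearest [Infinite G] (hS : Generates S)
    (hZ : ¬ QuasiIsometric (wordDist S) intDist) (r : ℕ) :
    ∃ (γ : ℤ → G) (z : G), γ 0 = 1 ∧ (∀ i j, wordDist S (γ i) (γ j) = intDist i j) ∧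
      r < wordLength S z ∧ ∀ n, wordDist S z 1 ≤ wordDist S z (γ n) := by
  have hd := hS.isMetricFun_wordDist
  obtain ⟨γ, hγ⟩ := hS.exists_biinfinite_geodesic
  obtain ⟨z, hz⟩ := hd.exists_far_of_not_quasiIsometric hZ hγ r
  obtain ⟨k, hk⟩ : ∃ k, ∀ n, wordLength S (z⁻¹ * γ k) ≤ wordLength S (z⁻¹ * γ n) :=
    ⟨_, fun n => Function.argmin_le (fun n => wordLength S (z⁻¹ * γ n)) n⟩
  have htrans := leftInvariant_wordDist S (γ k)⁻¹
  refine ⟨fun n => (γ k)⁻¹ * γ (k + n), (γ k)⁻¹ * z, by simp, fun i j => ?_, ?_, fun n => ?_⟩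
  · rw [htrans, hγ, intDist, intDist]
    push_cast
    rw [add_sub_add_left_eq_sub]
  · have := hz k
    rw [hd.symm, wordDist] at this
    exact_mod_cast this
  · rw [htrans, ← inv_mul_cancel (γ k), htrans]
    exact Nat.cast_le.2 (hk (k + n))

/-- `S` has `c`-tripods if at every distance `r ≥ c` from `1` there are three points with pairwise
Gromov products at most `c`. This is a quantitative way of saying that the boundary has at least
three points. -/
def HasTripods (S : Finset G) (c : ℕ) : Prop :=
  ∀ r, c ≤ r → ∃ a₁ a₂ a₃ : G,
    (wordLength S a₁ = r ∧ wordLength S a₂ = r ∧ wordLength S a₃ = r) ∧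
    gromov (wordDist S) 1 a₁ a₂ ≤ c ∧ gromov (wordDist S) 1 a₁ a₃ ≤ c ∧
      gromov (wordDist S) 1 a₂ a₃ ≤ c

/-- Two of the three points are on a bi-infinite geodesic, on both sides of its point nearest to a
far away point `z`; the third one is on the way from there to `z`. -/
theorem Generates.hasTripods [Infinite G] (hS : Generates S)
    (hZ : ¬ QuasiIsometric (wordDist S) intDist) (hδ : IsHyperbolicWith (wordDist S) δ)
    (hc : 2 * δ < c) : HasTripods S c := by
  intro r hr
  have hd := hS.isMetricFun_wordDist
  obtain ⟨γ, z, hγ₀, hγ, hz, hnear⟩ := hS.exists_biinfinite_geodesic_nearest hZ r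
  have hdist : ∀ i, wordDist S (γ i) 1 = |(i : ℝ)| := fun i => by
    rw [← hγ₀, hγ, intDist, Int.cast_zero, sub_zero]
  have hlen : ∀ i, wordLength S (γ i) = i.natAbs := fun i => by
    have := hdist i
    rw [hS.wordDist_one_right, ← Int.cast_abs, ← Int.natCast_natAbs, Int.cast_natCast] at this
    exact_mod_cast this
  have hcr : (c : ℝ) ≤ r := by exact_mod_cast hr
  have hz_side : ∀ s : ℤ, |(s : ℝ)| = 1 → gromov (wordDist S) 1 z (γ (s * r)) ≤ c := by
    intro s hs
    have hsc : ∀ t : ℕ, wordDist S (γ (s * t)) 1 = t := fun t => by simp [hdist, abs_mul, hs]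
    have hbetween : wordDist S (γ (s * c)) 1 + wordDist S (γ (s * r)) (γ (s * c)) =
        wordDist S (γ (s * r)) 1 := by
      rw [hsc, hsc, hγ, intDist]
      push_cast
      rw [← mul_sub, abs_mul, hs, abs_of_nonneg (by linarith)]
      ring
    exact hsc c ▸ hδ.gromov_le_of_nearest hd hbetween (by rwa [hsc]) (hnear _)
  obtain ⟨a, har, ha⟩ := hS.exists_between hz.le
  refine ⟨γ r, γ (-r), a, ⟨by simp [hlen], by simp [hlen], har⟩, ?_, ?_, ?_⟩
  · rw [gromov, hdist, hdist, hγ, intDist]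
    push_cast
    rw [sub_neg_eq_add, abs_neg, abs_of_nonneg (by positivity), abs_of_nonneg (by positivity)]
    linarith
  · refine (hd.gromov_le_gromov_of_between _ ha).trans ?_
    simpa [hd.gromov_comm 1 z] using hz_side 1 (by simp)
  · refine (hd.gromov_le_gromov_of_between _ ha).trans ?_
    simpa [hd.gromov_comm 1 z] using hz_side (-1) (by simp)

/-- At most one of the three points of a tripod is in the direction of `o`. -/
theorem HasTripods.exists_pair (h : HasTripods S c) (hδ : IsHyperbolicWith (wordDist S) δ)
    {r : ℕ} (hr : c ≤ r) (o : G) :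
    ∃ a b : G, wordLength S a = r ∧ wordLength S b = r ∧ gromov (wordDist S) 1 a b ≤ c ∧
      gromov (wordDist S) 1 o a ≤ c + δ ∧ gromov (wordDist S) 1 o b ≤ c + δ := by
  obtain ⟨a₁, a₂, a₃, ⟨h₁, h₂, h₃⟩, h₁₂, h₁₃, h₂₃⟩ := h r hr
  have hor : ∀ {a b : G}, gromov (wordDist S) 1 a b ≤ c →
      gromov (wordDist S) 1 o a ≤ c + δ ∨ gromov (wordDist S) 1 o b ≤ c + δ :=
    fun hab => (le_or_gt _ _).imp_right (hδ.gromov_le_of_lt hab)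
  by_cases ho₁ : gromov (wordDist S) 1 o a₁ ≤ c + δ
  · by_cases ho₂ : gromov (wordDist S) 1 o a₂ ≤ c + δ
    · exact ⟨a₁, a₂, h₁, h₂, h₁₂, ho₁, ho₂⟩
    · exact ⟨a₁, a₃, h₁, h₃, h₁₃, ho₁, (hor h₂₃).resolve_left ho₂⟩
  · exact ⟨a₂, a₃, h₂, h₃, h₂₃, (hor h₁₂).resolve_left ho₁, (hor h₁₃).resolve_left ho₁⟩

theorem HasTripods.exists_pair_ge (h : HasTripods S c) (hS : Generates S)
    (hδ : IsHyperbolicWith (wordDist S) δ) {r : ℕ} (hr : c ≤ r) (R : ℕ) (o : G) :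
    ∃ a b : G, R ≤ wordLength S a ∧ wordLength S b = r ∧ gromov (wordDist S) 1 a b ≤ c ∧
      gromov (wordDist S) 1 o a ≤ c + δ ∧ gromov (wordDist S) 1 o b ≤ c + δ := by
  have hd := hS.isMetricFun_wordDist
  obtain ⟨a, b', ha, hb', hab', hoa, hob'⟩ := h.exists_pair hδ (hr.trans (le_max_right R r)) o
  obtain ⟨b, hb, hbb'⟩ := hS.exists_between (g := b') (k := r) (hb' ▸ le_max_right R r)
  exact ⟨a, b, ha ▸ le_max_left R r, hb, (hd.gromov_le_gromov_of_between a hbb').trans hab', hoa,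
    (hd.gromov_le_gromov_of_between o hbb').trans hob'⟩

theorem Generates.gromov_self_mul_add (hS : Generates S) (b z : G) :
    gromov (wordDist S) 1 b (b * z) + gromov (wordDist S) 1 b⁻¹ z = wordLength S b := by
  have hinv := (leftInvariant_wordDist S).gromov_mul_left b 1 b⁻¹ z
  rw [mul_one, mul_inv_cancel] at hinv
  rw [← hinv, hS.isMetricFun_wordDist.gromov_add_gromov, hS.wordDist_one_right]

theorem Generates.wordLength_le_wordLength_mul (hS : Generates S) {b z : G}
    (h : 2 * gromov (wordDist S) 1 b⁻¹ z ≤ wordLength S b) :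
    wordLength S z ≤ wordLength S (b * z) := by
  have hlong := hS.gromov_self_mul_add b z
  rw [gromov, hS.wordDist_one_right, hS.wordDist_one_right, wordDist_self_mul] at hlong
  have : (wordLength S z : ℝ) ≤ wordLength S (b * z) := by linarith
  exact_mod_cast this

theorem Generates.gromov_mul_mul_le (hS : Generates S) (b z z' : G) :
    gromov (wordDist S) 1 (b * z) (b * z') ≤ gromov (wordDist S) 1 z z' + wordLength S b := by
  have h := hS.isMetricFun_wordDist.gromov_le_gromov_add_dist 1 (b * z) (b * z') (b * 1)
  rwa [(leftInvariant_wordDist S).gromov_mul_left, ← wordDist_self_mul S 1 b, one_mul,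
    mul_one] at *

/-- Induction on `N`: given two directions `a` and `b` away from `o`, keep `a` itself and translate
by `b` the `N` points obtained for the direction of `b⁻¹`. -/
theorem HasTripods.exists_separated (h : HasTripods S c) (hS : Generates S)
    (hδ : IsHyperbolicWith (wordDist S) δ) (N : ℕ) :
    ∃ K : ℝ, ∀ (R : ℕ) (o : G), ∃ l : List G, l.length = N ∧
      (∀ y ∈ l, R ≤ wordLength S y ∧ gromov (wordDist S) 1 o y ≤ c + 2 * δ) ∧
      l.Pairwise fun y y' => gromov (wordDist S) 1 y y' ≤ K := by
  have hd := hS.isMetricFun_wordDist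
  have hδ₀ := hδ.nonneg 1
  induction N with
  | zero => exact ⟨0, fun R o => ⟨[], by simp⟩⟩
  | succ N ih =>
    obtain ⟨K, hK⟩ := ih
    obtain ⟨r, hr⟩ := exists_nat_gt (2 * c + 4 * δ)
    have hcr : c ≤ r := by
      have : (c : ℝ) ≤ r := by linarith [(c.cast_nonneg : (0 : ℝ) ≤ c)]
      exact_mod_cast this
    refine ⟨max (K + r) (c + δ), fun R o => ?_⟩
    obtain ⟨a, b, ha, hb, hab, hoa, hob⟩ := h.exists_pair_ge hS hδ hcr R o
    obtain ⟨l, hlen, hl, hsep⟩ := hK R b⁻¹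
    have hfar : ∀ z ∈ l, c + 2 * δ < gromov (wordDist S) 1 (b * z) b := fun z hz => by
      have := hS.gromov_self_mul_add b z
      rw [hb, hd.gromov_comm] at this
      linarith [(hl z hz).2]
    refine ⟨a :: l.map (b * ·), by simp [hlen], ?_, ?_⟩
    · simp only [List.mem_cons, List.mem_map, forall_eq_or_imp, forall_exists_index, and_imp,
        forall_apply_eq_imp_iff₂]
      refine ⟨⟨ha, by linarith⟩, fun z hz => ⟨?_, ?_⟩⟩
      · refine (hl z hz).1.trans (hS.wordLength_le_wordLength_mul ?_)
        rw [hb]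
        linarith [(hl z hz).2]
      · rw [hd.gromov_comm] at hob ⊢
        linarith [hδ.gromov_le_of_lt (x := b * z) hob (by linarith [hfar z hz])]
    · rw [List.pairwise_cons, List.pairwise_map]
      refine ⟨?_, hsep.imp fun {z z'} hzz' => le_max_of_le_left ?_⟩
      · simp only [List.mem_map, forall_exists_index, and_imp, forall_apply_eq_imp_iff₂]
        refine fun z hz => le_max_of_le_right ?_
        rw [hd.gromov_comm] at hab ⊢
        exact hδ.gromov_le_of_lt hab (by linarith [hfar z hz])
      · exact (hS.gromov_mul_mul_le b z z').trans (by rw [hb]; gcongr)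

theorem HasTripods.exists_card_sphere (h : HasTripods S c) (hS : Generates S)
    (hδ : IsHyperbolicWith (wordDist S) δ) (N : ℕ) :
    ∃ R : ℕ, ∀ o : G, ∃ F : Finset G, F.card = N ∧
      ∀ y ∈ F, wordLength S y = R ∧ gromov (wordDist S) 1 o y ≤ c + 2 * δ := by
  classical
  have hd := hS.isMetricFun_wordDist
  obtain ⟨K, hK⟩ := h.exists_separated hS hδ N
  obtain ⟨R, hR⟩ := exists_nat_gt K
  refine ⟨R, fun o => ?_⟩
  obtain ⟨l, hlen, hl, hsep⟩ := hK R o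
  have hprefix : ∀ y, ∃ t, y ∈ l → wordLength S t = R ∧
      wordDist S t 1 + wordDist S y t = wordDist S y 1 := fun y => by
    by_cases hy : y ∈ l
    · exact (hS.exists_between (hl y hy).1).imp fun _ ht _ => ht
    · exact ⟨1, fun hy' => absurd hy' hy⟩
  choose t ht using hprefix
  have hnodup : (l.map t).Nodup := by
    refine List.Pairwise.map _ (fun _ _ h => h) (hsep.imp_of_mem fun {y y'} hy hy' hle heq => ?_)
    have hyt := ht y hy
    have hyt' := ht y' hy'
    have hle' := (hd.gromov_le_gromov_of_between (t y) hyt'.2).trans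
      (((hd.gromov_comm _ _ _).trans_le (hd.gromov_le_gromov_of_between y' hyt.2)).trans
        ((hd.gromov_comm _ _ _).trans_le hle))
    rw [← heq, hd.gromov_self, hS.wordDist_one_right, hyt.1] at hle'
    linarith
  refine ⟨(l.map t).toFinset, ?_, ?_⟩
  · rw [List.toFinset_card_of_nodup hnodup, List.length_map, hlen]
  · simp only [List.mem_toFinset, List.mem_map, forall_exists_index, and_imp,
      forall_apply_eq_imp_iff₂]
    exact fun y hy => ⟨(ht y hy).1,
      (hd.gromov_le_gromov_of_between o (ht y hy).2).trans (hl y hy).2⟩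

theorem Generates.wordLength_mul_inv_le_of_outward (hS : Generates S)
    (hδ : IsHyperbolicWith (wordDist S) δ) {R : ℕ} {t : ℝ} {y g g' : G}
    (hg : wordLength S g = R) (hgt : gromov (wordDist S) (y * g⁻¹) 1 y ≤ t)
    (hg' : wordLength S g' = R) (hgt' : gromov (wordDist S) (y * g'⁻¹) 1 y ≤ t) :
    wordLength S (g * g'⁻¹) ≤ 2 * (t + δ) := by
  have hd := hS.isMetricFun_wordDist
  have hback : ∀ g, wordLength S g = R → gromov (wordDist S) (y * g⁻¹) 1 y ≤ t →
      R - t ≤ gromov (wordDist S) y 1 (y * g⁻¹) := fun g hg hgt => by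
    have := hd.gromov_add_gromov (y * g⁻¹) y 1
    rw [hd.symm, hS.wordDist_mul_self, hS.wordLength_inv, hg, hd.gromov_comm,
      hd.gromov_comm y] at this
    linarith
  have := hδ.sub_le_gromov (hback g hg hgt) (hback g' hg' hgt')
  rw [gromov, hS.wordDist_mul_self, hS.wordDist_mul_self, leftInvariant_wordDist S y, wordDist,
    hS.wordLength_inv, hS.wordLength_inv, hg, hg', inv_inv] at this
  linarith

open scoped Classical in
/-- The relation `r x g` says that `g` has a fixed length and that going from `x` to `x * g` is a
step away from `1`: there are many such steps from every `x`, but few to every `y`. -/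
theorem Generates.exists_branching [Infinite G] (hS : Generates S)
    (hhyp : IsHyperbolic (wordDist S)) (hZ : ¬ QuasiIsometric (wordDist S) intDist) :
    ∃ M : ℕ, ∀ N : ℕ, ∃ (s : Finset G) (r : G → G → Prop),
      (∀ x, N ≤ (s.filter (r x)).card) ∧ ∀ y, (s.filter fun g => r (y * g⁻¹) g).card ≤ M := by
  obtain ⟨δ, -, hδ⟩ := hhyp
  obtain ⟨c, hc⟩ := exists_nat_gt (2 * δ)
  set t : ℝ := c + 2 * δ
  obtain ⟨m, hm⟩ := exists_nat_gt (2 * (t + δ))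
  have hball := hS.finite_setOf_wordLength_le m
  refine ⟨hball.toFinset.card, fun N => ?_⟩
  obtain ⟨R, hR⟩ := (hS.hasTripods hZ hδ hc).exists_card_sphere hS hδ N
  refine ⟨(hS.finite_setOf_wordLength_le R).toFinset,
    fun x g => wordLength S g = R ∧ gromov (wordDist S) x 1 (x * g) ≤ t, fun x => ?_, fun y => ?_⟩
  · obtain ⟨F, hcard, hF⟩ := hR x⁻¹
    rw [← hcard]
    refine Finset.card_le_card fun g hg => ?_
    obtain ⟨hgR, hgt⟩ := hF g hg
    rw [← (leftInvariant_wordDist S).gromov_mul_left x, mul_one, mul_inv_cancel] at hgt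
    simpa [hgR] using hgt
  · refine (Finset.eq_empty_or_nonempty _).elim
      (fun hempty => (Finset.card_eq_zero.2 hempty).trans_le (Nat.zero_le _)) fun ⟨g₀, hg₀⟩ => ?_
    refine Finset.card_le_card_of_injOn (fun g => g₀ * g⁻¹) (fun g hg => ?_) fun g _ g' _ h => by
      simpa using h
    simp only [Finset.coe_filter, Set.mem_ofPred_eq, Finset.mem_filter, inv_mul_cancel_right]
      at hg hg₀
    have hle := hS.wordLength_mul_inv_le_of_outward hδ hg₀.2.1 hg₀.2.2 hg.2.1 hg.2.2
    simpa using (by exact_mod_cast hle.trans hm.le : wordLength S (g₀ * g⁻¹) ≤ m)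

end Branching

/-! ### Finitely supported symmetric random walks -/

section Walk

/-- `μ` is a symmetric probability density whose support is the finite set `T`, and `T` generates
the group. Keeping track of the support turns the series in `convPow` and `IsHarmonicFn` into sums
over `T`. -/
structure IsSymmetricWalk (μ : G → ℝ) (T : Finset G) : Prop where
  nonneg : ∀ g, 0 ≤ μ g
  sum_eq_one : ∑ s ∈ T, μ s = 1
  symm : ∀ g, μ g⁻¹ = μ g
  mem_iff : ∀ g, g ∈ T ↔ μ g ≠ 0
  generates : Generates T

theorem exists_isSymmetricWalk {μ : G → ℝ} (hprob : IsProbDensity μ) (hsymm : IsSymmetric μ)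
    (hfin : {g : G | μ g ≠ 0}.Finite) (hgen : GeneratesSupp μ) :
    ∃ T : Finset G, IsSymmetricWalk μ T := by
  refine ⟨hfin.toFinset, hprob.1, ?_, hsymm, fun g => by simp,
    by simpa [Generates, GeneratesSupp] using hgen⟩
  rw [← hprob.2.tsum_eq]
  exact (tsum_eq_sum fun g hg => by simpa using hg).symm

theorem convPow_zero (μ : G → ℝ) (g : G) [Decidable (g = 1)] :
    convPow μ 0 g = if g = 1 then 1 else 0 := by
  simp only [convPow]
  congr

namespace IsSymmetricWalk

variable {μ : G → ℝ} {T : Finset G}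

theorem pos (W : IsSymmetricWalk μ T) {s : G} (hs : s ∈ T) : 0 < μ s :=
  (W.nonneg s).lt_of_ne' ((W.mem_iff s).1 hs)

theorem inv_mem (W : IsSymmetricWalk μ T) {s : G} (hs : s ∈ T) : s⁻¹ ∈ T := by
  rwa [W.mem_iff, W.symm, ← W.mem_iff]

theorem sum_inv {M : Type*} [AddCommMonoid M] (W : IsSymmetricWalk μ T) (φ : G → M) :
    ∑ s ∈ T, φ s⁻¹ = ∑ s ∈ T, φ s :=
  Finset.sum_nbij' (·⁻¹) (·⁻¹) (fun _ => W.inv_mem) (fun _ => W.inv_mem) (by simp) (by simp)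
    (by simp)

theorem tsum_mul (W : IsSymmetricWalk μ T) (φ : G → ℝ) (x : G) :
    ∑' y, φ y * μ (x⁻¹ * y) = ∑ s ∈ T, μ s * φ (x * s) := by
  rw [← (Equiv.mulLeft x).tsum_eq, tsum_eq_sum (s := T)]
  · exact Finset.sum_congr rfl fun s _ => by simp [mul_comm]
  · intro s hs
    rw [W.mem_iff, not_not] at hs
    simp [hs]

theorem isHarmonicFn_iff (W : IsSymmetricWalk μ T) {h : G → ℝ} :
    IsHarmonicFn μ h ↔ ∀ x, h x = ∑ s ∈ T, μ s * h (x * s) := by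
  simp only [IsHarmonicFn, W.tsum_mul]

theorem convPow_succ (W : IsSymmetricWalk μ T) (n : ℕ) (g : G) :
    convPow μ (n + 1) g = ∑ s ∈ T, μ s * convPow μ n (g * s) := by
  rw [← W.tsum_mul]
  exact tsum_congr fun y => by rw [← W.symm, mul_inv_rev, inv_inv]

theorem convPow_nonneg (W : IsSymmetricWalk μ T) (n : ℕ) (g : G) : 0 ≤ convPow μ n g := by
  induction n generalizing g with
  | zero =>
    classical
    rw [convPow_zero]
    positivity
  | succ n ih =>
    rw [W.convPow_succ]
    exact Finset.sum_nonneg fun s _ => mul_nonneg (W.nonneg s) (ih _)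

theorem convPow_succ_left (W : IsSymmetricWalk μ T) (n : ℕ) (g : G) :
    convPow μ (n + 1) g = ∑ s ∈ T, μ s * convPow μ n (s * g) := by
  induction n generalizing g with
  | zero =>
    classical
    rw [W.convPow_succ]
    simp only [convPow_zero, mul_eq_one_iff_eq_inv' (a := g), mul_eq_one_iff_eq_inv (b := g)]
  | succ n ih =>
    calc convPow μ (n + 1 + 1) g
        = ∑ s ∈ T, ∑ t ∈ T, μ s * (μ t * convPow μ n (t * (g * s))) := by
          simp only [W.convPow_succ (n + 1), ih, Finset.mul_sum]
      _ = ∑ t ∈ T, ∑ s ∈ T, μ t * (μ s * convPow μ n (t * g * s)) := by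
          rw [Finset.sum_comm]
          simp only [mul_left_comm (μ _) (μ _), mul_assoc]
      _ = ∑ t ∈ T, μ t * convPow μ (n + 1) (t * g) := by
          simp only [W.convPow_succ n, Finset.mul_sum]

theorem convPow_inv (W : IsSymmetricWalk μ T) (n : ℕ) (g : G) :
    convPow μ n g⁻¹ = convPow μ n g := by
  induction n generalizing g with
  | zero =>
    classical
    simp only [convPow_zero, inv_eq_one]
  | succ n ih =>
    rw [W.convPow_succ, W.convPow_succ_left, ← W.sum_inv]
    exact Finset.sum_congr rfl fun s _ => by rw [W.symm, ← mul_inv_rev, ih]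

theorem convPow_prod_pos (W : IsSymmetricWalk μ T) {l : List G} (hl : ∀ a ∈ l, a ∈ T) :
    0 < convPow μ l.length l.prod := by
  induction l with
  | nil => simp [convPow]
  | cons a l ih =>
    rw [List.forall_mem_cons] at hl
    rw [List.length_cons, List.prod_cons, W.convPow_succ_left]
    refine Finset.sum_pos' (fun s _ => mul_nonneg (W.nonneg s) (W.convPow_nonneg _ _))
      ⟨a⁻¹, W.inv_mem hl.1, mul_pos (W.pos (W.inv_mem hl.1)) ?_⟩
    rw [inv_mul_cancel_left]
    exact ih hl.2

theorem convPow_eq_zero (W : IsSymmetricWalk μ T) {S : Finset G} (hS : Generates S) {r : ℕ}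
    (hr : ∀ s ∈ T, wordLength S s ≤ r) {n : ℕ} {g : G} (hg : n * r < wordLength S g) :
    convPow μ n g = 0 := by
  induction n generalizing g with
  | zero =>
    have : g ≠ 1 := by
      rintro rfl
      simp [wordLength_one] at hg
    simp [convPow, this]
  | succ n ih =>
    rw [W.convPow_succ]
    refine Finset.sum_eq_zero fun s hs => ?_
    have hgs := hS.wordLength_mul_le (g * s) s⁻¹
    rw [mul_inv_cancel_right, hS.wordLength_inv] at hgs
    rw [ih (by linarith [hr s hs]), mul_zero]

end IsSymmetricWalk

end Walk

/-! ### The spectral gap -/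

section SpectralGap

open scoped lp InnerProductSpace

variable {μ : G → ℝ} {T : Finset G}

/-- The right regular representation on `ℓ²`: `(rightTranslation g f) x = f (x * g)`. -/
def rightTranslation : G →* (ℓ²(G, ℝ) →ₗᵢ[ℝ] ℓ²(G, ℝ)) where
  toFun g :=
    { toFun f := ⟨fun x => f (x * g), memℓp_gen
        (((lp.memℓp f).summable (by simp)).comp_injective (mul_left_injective g))⟩
      map_add' _ _ := rfl
      map_smul' _ _ := rfl
      norm_map' f := by
        rw [lp.norm_eq_tsum_rpow (by simp), lp.norm_eq_tsum_rpow (by simp)]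
        exact congrArg (· ^ _) ((Equiv.mulRight g).tsum_eq fun x => ‖f x‖ ^ _) }
  map_one' := by
    ext f x
    exact congrArg f (mul_one x)
  map_mul' g h := by
    ext f x
    exact congrArg f (mul_assoc x g h).symm

theorem rightTranslation_apply (g : G) (f : ℓ²(G, ℝ)) (x : G) :
    rightTranslation g f x = f (x * g) := rfl

theorem rightTranslation_mul (g h : G) (f : ℓ²(G, ℝ)) :
    rightTranslation (g * h) f = rightTranslation g (rightTranslation h f) := by
  rw [map_mul]
  rfl

theorem rightTranslation_rightTranslation_inv (g : G) (f : ℓ²(G, ℝ)) :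
    rightTranslation g (rightTranslation g⁻¹ f) = f := by
  rw [← rightTranslation_mul, mul_inv_cancel, map_one]
  rfl

theorem inner_rightTranslation (g : G) (f h : ℓ²(G, ℝ)) :
    ⟪rightTranslation g f, h⟫_ℝ = ⟪f, rightTranslation g⁻¹ h⟫_ℝ := by
  rw [← (rightTranslation g).inner_map_map f, rightTranslation_rightTranslation_inv]

theorem norm_sub_rightTranslation_sq (g : G) (f : ℓ²(G, ℝ)) :
    ‖f - rightTranslation g f‖ ^ 2 = 2 * ‖f‖ ^ 2 - 2 * ⟪rightTranslation g f, f⟫_ℝ := by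
  rw [norm_sub_sq_real, LinearIsometry.norm_map, real_inner_comm]
  ring

theorem hasSum_sq {ι : Type*} (f : ℓ²(ι, ℝ)) : HasSum (fun x => f x ^ 2) (‖f‖ ^ 2) := by
  simpa [real_inner_self_eq_norm_sq] using lp.hasSum_inner (𝕜 := ℝ) f f

open scoped Classical in
theorem sum_tsum_sq_le_of_branching {s : Finset G} {r : G → G → Prop} {M : ℕ}
    (hM : ∀ y, (s.filter fun g => r (y * g⁻¹) g).card ≤ M) (f : ℓ²(G, ℝ)) :
    ∑ g ∈ s, ∑' x, (if r x g then f (x * g) ^ 2 else 0) ≤ M * ‖f‖ ^ 2 := by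
  have hsummable : ∀ g, Summable fun y => if r (y * g⁻¹) g then f y ^ 2 else 0 := fun g =>
    (hasSum_sq f).summable.of_nonneg_of_le (fun y => by positivity)
      fun y => ite_le_sup _ _ _ |>.trans (by simp [sq_nonneg])
  calc ∑ g ∈ s, ∑' x, (if r x g then f (x * g) ^ 2 else 0)
      = ∑ g ∈ s, ∑' y, (if r (y * g⁻¹) g then f y ^ 2 else 0) := by
        refine Finset.sum_congr rfl fun g _ => ?_
        rw [← (Equiv.mulRight g).tsum_eq fun y => if r (y * g⁻¹) g then f y ^ 2 else 0]
        simp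
    _ = ∑' y, ((s.filter fun g => r (y * g⁻¹) g).card : ℝ) * f y ^ 2 := by
        rw [← Summable.tsum_finsetSum fun g _ => hsummable g]
        simp only [← Finset.sum_filter, Finset.sum_const, nsmul_eq_mul]
    _ ≤ ∑' y, M * f y ^ 2 := by
        refine Summable.tsum_mono ?_ ((hasSum_sq f).summable.mul_left _) fun y => ?_
        · simpa only [← Finset.sum_filter, Finset.sum_const, nsmul_eq_mul] using
            summable_sum fun g (_ : g ∈ s) => hsummable g
        · exact mul_le_mul_of_nonneg_right (Nat.cast_le.2 (hM y)) (sq_nonneg _)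
    _ = M * ‖f‖ ^ 2 := by rw [tsum_mul_left, (hasSum_sq f).tsum_eq]

open scoped Classical in
/-- Sum `f x ^ 2 ≤ 2 * f (x * g) ^ 2 + 2 * (f x - f (x * g)) ^ 2` over all steps `r x g`. -/
theorem mul_norm_sq_le_of_branching {s : Finset G} {r : G → G → Prop} {M N : ℕ}
    (hN : ∀ x, N ≤ (s.filter (r x)).card)
    (hM : ∀ y, (s.filter fun g => r (y * g⁻¹) g).card ≤ M) (f : ℓ²(G, ℝ)) :
    N * ‖f‖ ^ 2 ≤ 2 * (M * ‖f‖ ^ 2) + 2 * ∑ g ∈ s, ‖f - rightTranslation g f‖ ^ 2 := by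
  have hstep : ∀ g, HasSum (fun x => 2 * (if r x g then f (x * g) ^ 2 else 0) +
      2 * (f - rightTranslation g f) x ^ 2)
      (2 * ∑' x, (if r x g then f (x * g) ^ 2 else 0) + 2 * ‖f - rightTranslation g f‖ ^ 2) :=
    fun g => by
      refine (Summable.hasSum ?_).mul_left 2 |>.add ((hasSum_sq _).mul_left 2)
      refine (hasSum_sq (rightTranslation g f)).summable.of_nonneg_of_le
        (fun x => by positivity) fun x => ?_
      exact ite_le_sup _ _ _ |>.trans (by simp [rightTranslation_apply, sq_nonneg])
  calc N * ‖f‖ ^ 2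
      ≤ ∑ g ∈ s, (2 * ∑' x, (if r x g then f (x * g) ^ 2 else 0) +
          2 * ‖f - rightTranslation g f‖ ^ 2) := by
        refine hasSum_le (fun x => ?_) ((hasSum_sq f).mul_left (N : ℝ))
          (hasSum_sum fun g _ => hstep g)
        calc N * f x ^ 2 ≤ (s.filter (r x)).card * f x ^ 2 :=
              mul_le_mul_of_nonneg_right (Nat.cast_le.2 (hN x)) (sq_nonneg _)
          _ = ∑ g ∈ s, if r x g then f x ^ 2 else 0 := by
              rw [← Finset.sum_filter, Finset.sum_const, nsmul_eq_mul]
          _ ≤ _ := Finset.sum_le_sum fun g _ => by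
              simp only [lp.coeFn_sub, Pi.sub_apply, rightTranslation_apply]
              split_ifs
              · linarith [sq_nonneg (f x - 2 * f (x * g))]
              · positivity
    _ ≤ _ := by
        rw [Finset.sum_add_distrib, ← Finset.mul_sum, ← Finset.mul_sum]
        gcongr
        exact sum_tsum_sq_le_of_branching hM f

/-- The Dirichlet form of the walk (up to a factor `2`). -/
def dirichletForm (μ : G → ℝ) (T : Finset G) (f : ℓ²(G, ℝ)) : ℝ :=
  ∑ s ∈ T, μ s * ‖f - rightTranslation s f‖ ^ 2

theorem IsSymmetricWalk.dirichletForm_nonneg (W : IsSymmetricWalk μ T) (f : ℓ²(G, ℝ)) :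
    0 ≤ dirichletForm μ T f :=
  Finset.sum_nonneg fun s _ => mul_nonneg (W.nonneg s) (sq_nonneg _)

theorem IsSymmetricWalk.exists_norm_sub_rightTranslation_le (W : IsSymmetricWalk μ T) (g : G) :
    ∃ C : ℝ, ∀ f, ‖f - rightTranslation g f‖ ≤ C * √(dirichletForm μ T f) := by
  have hg : g ∈ Subgroup.closure (T : Set G) := by
    rw [W.generates]
    trivial
  induction hg using Subgroup.closure_induction with
  | mem s hs =>
    refine ⟨√(μ s)⁻¹, fun f => ?_⟩
    rw [← Real.sqrt_mul (inv_nonneg.2 (W.nonneg s))]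
    refine Real.le_sqrt_of_sq_le ?_
    rw [inv_mul_eq_div, le_div_iff₀' (W.pos hs)]
    exact Finset.single_le_sum (f := fun s => μ s * ‖f - rightTranslation s f‖ ^ 2)
      (fun t _ => mul_nonneg (W.nonneg t) (sq_nonneg _)) hs
  | one => exact ⟨0, fun f => by simp⟩
  | mul g h _ _ hg hh =>
    obtain ⟨C, hC⟩ := hg
    obtain ⟨C', hC'⟩ := hh
    refine ⟨C + C', fun f => ?_⟩
    calc ‖f - rightTranslation (g * h) f‖
        = ‖(f - rightTranslation g f) + rightTranslation g (f - rightTranslation h f)‖ := by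
          rw [rightTranslation_mul, map_sub, sub_add_sub_cancel]
      _ ≤ ‖f - rightTranslation g f‖ + ‖f - rightTranslation h f‖ :=
          (norm_add_le _ _).trans_eq (by rw [LinearIsometry.norm_map])
      _ ≤ _ := by
          rw [add_mul]
          exact add_le_add (hC f) (hC' f)
  | inv g _ hg =>
    obtain ⟨C, hC⟩ := hg
    refine ⟨C, fun f => (hC f).trans_eq' ?_⟩
    rw [← (rightTranslation g).norm_map (f - rightTranslation g⁻¹ f), map_sub,
      rightTranslation_rightTranslation_inv, norm_sub_rev]

theorem IsSymmetricWalk.exists_norm_sq_le_dirichletForm [Infinite G] (W : IsSymmetricWalk μ T)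
    {S : Finset G} (hS : Generates S) (hhyp : IsHyperbolic (wordDist S))
    (hZ : ¬ QuasiIsometric (wordDist S) intDist) :
    ∃ K : ℝ, 0 < K ∧ ∀ f : ℓ²(G, ℝ), ‖f‖ ^ 2 ≤ K * dirichletForm μ T f := by
  classical
  obtain ⟨M, hM⟩ := hS.exists_branching hhyp hZ
  obtain ⟨s, r, hout, hin⟩ := hM (2 * M + 1)
  choose C hC using W.exists_norm_sub_rightTranslation_le
  refine ⟨2 * ∑ g ∈ s, C g ^ 2 + 1, by positivity, fun f => ?_⟩
  have hbranch := mul_norm_sq_le_of_branching hout hin f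
  have hsum : ∑ g ∈ s, ‖f - rightTranslation g f‖ ^ 2 ≤
      (∑ g ∈ s, C g ^ 2) * dirichletForm μ T f := by
    rw [Finset.sum_mul]
    gcongr with g
    rw [← Real.sq_sqrt (W.dirichletForm_nonneg f), ← mul_pow]
    gcongr
    exact hC g f
  push_cast at hbranch
  linarith [W.dirichletForm_nonneg f]

/-- The Markov operator `f ↦ (x ↦ ∑ s, μ s * f (x * s))` of the walk on `ℓ²`. -/
def markovOperator (μ : G → ℝ) (T : Finset G) : ℓ²(G, ℝ) →L[ℝ] ℓ²(G, ℝ) :=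
  ∑ s ∈ T, μ s • (rightTranslation s).toContinuousLinearMap

theorem markovOperator_apply (μ : G → ℝ) (T : Finset G) (f : ℓ²(G, ℝ)) :
    markovOperator μ T f = ∑ s ∈ T, μ s • rightTranslation s f := by
  simp [markovOperator]

theorem inner_markovOperator (μ : G → ℝ) (T : Finset G) (f h : ℓ²(G, ℝ)) :
    ⟪markovOperator μ T f, h⟫_ℝ = ∑ s ∈ T, μ s * ⟪rightTranslation s f, h⟫_ℝ := by
  simp only [markovOperator_apply, sum_inner, real_inner_smul_left]

namespace IsSymmetricWalk

theorem isSymmetric_markovOperator (W : IsSymmetricWalk μ T) :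
    (markovOperator μ T).IsSymmetric := fun f h => by
  change ⟪markovOperator μ T f, h⟫_ℝ = ⟪f, markovOperator μ T h⟫_ℝ
  rw [← real_inner_comm f, inner_markovOperator, inner_markovOperator,
    ← W.sum_inv]
  refine Finset.sum_congr rfl fun s _ => ?_
  rw [W.symm, inner_rightTranslation, inv_inv, real_inner_comm]

theorem inner_markovOperator_self (W : IsSymmetricWalk μ T) (f : ℓ²(G, ℝ)) :
    ⟪markovOperator μ T f, f⟫_ℝ = ‖f‖ ^ 2 - dirichletForm μ T f / 2 := by
  rw [inner_markovOperator, dirichletForm]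
  simp only [norm_sub_rightTranslation_sq, mul_sub, Finset.sum_sub_distrib, ← Finset.sum_mul,
    W.sum_eq_one]
  simp only [mul_left_comm _ (2 : ℝ), ← Finset.mul_sum]
  ring

theorem abs_inner_markovOperator_le (W : IsSymmetricWalk μ T) (f : ℓ²(G, ℝ)) :
    |⟪markovOperator μ T f, f⟫_ℝ| ≤ ⟪markovOperator μ T (lp.toNorm f), lp.toNorm f⟫_ℝ := by
  rw [inner_markovOperator, inner_markovOperator]
  refine (Finset.abs_sum_le_sum_abs _ _).trans (Finset.sum_le_sum fun s _ => ?_)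
  rw [abs_mul, abs_of_nonneg (W.nonneg s)]
  refine mul_le_mul_of_nonneg_left ?_ (W.nonneg s)
  rw [lp.inner_eq_tsum, lp.inner_eq_tsum]
  have hsum := (lp.summable_inner (𝕜 := ℝ) (rightTranslation s f) f).norm
  exact (norm_tsum_le_tsum_norm hsum).trans_eq (tsum_congr fun x => norm_mul _ _)

theorem convPow_eq_markovOperator_pow [DecidableEq G] (W : IsSymmetricWalk μ T) (n : ℕ) (g : G) :
    convPow μ n g = (markovOperator μ T ^ n) (lp.single 2 1 1) g := by
  induction n generalizing g with
  | zero => simp [convPow_zero, lp.single_apply, Pi.single_apply]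
  | succ n ih =>
    rw [W.convPow_succ, pow_succ', mul_apply_eq_comp, markovOperator_apply,
      lp.coeFn_sum, Finset.sum_apply]
    simp only [ih, lp.coeFn_smul, Pi.smul_apply, smul_eq_mul, rightTranslation_apply]

theorem convPow_le_norm_pow (W : IsSymmetricWalk μ T) (n : ℕ) (g : G) :
    convPow μ n g ≤ ‖markovOperator μ T‖ ^ n := by
  classical
  have hdelta : ‖(lp.single 2 1 1 : ℓ²(G, ℝ))‖ = 1 := by rw [lp.norm_single two_pos, norm_one]
  have : Nontrivial ℓ²(G, ℝ) := nontrivial_of_ne _ 0 (norm_ne_zero_iff.1 (hdelta ▸ one_ne_zero))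
  calc convPow μ n g ≤ ‖(markovOperator μ T ^ n) (lp.single 2 1 1)‖ := by
        rw [W.convPow_eq_markovOperator_pow]
        exact (Real.le_norm_self _).trans (lp.norm_apply_le_norm two_ne_zero _ g)
    _ ≤ ‖markovOperator μ T ^ n‖ := by
        simpa only [hdelta, mul_one] using (markovOperator μ T ^ n).le_opNorm (lp.single 2 1 1)
    _ ≤ ‖markovOperator μ T‖ ^ n := norm_pow_le _ n

end IsSymmetricWalk

/-- `μ` is a finitely supported symmetric walk whose return probabilities decay exponentially. -/
structure HasSpectralGap (μ : G → ℝ) (T : Finset G) (lam : ℝ) : Prop extends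
    IsSymmetricWalk μ T where
  rate_pos : 0 < lam
  rate_lt_one : lam < 1
  convPow_le : ∀ n g, convPow μ n g ≤ lam ^ n

theorem IsSymmetricWalk.exists_hasSpectralGap [Infinite G] (W : IsSymmetricWalk μ T)
    {S : Finset G} (hS : Generates S) (hhyp : IsHyperbolic (wordDist S))
    (hZ : ¬ QuasiIsometric (wordDist S) intDist) : ∃ lam, HasSpectralGap μ T lam := by
  obtain ⟨K, hK₀, hK⟩ := W.exists_norm_sq_le_dirichletForm hS hhyp hZ
  -- The maximum with `1 / 2` only makes `lam` positive.
  set lam : ℝ := max (1 / 2) (1 - (2 * K)⁻¹)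
  have hlam : 0 < lam := lt_max_of_lt_left (by norm_num)
  have hform : ∀ f, |⟪markovOperator μ T f, f⟫_ℝ| ≤ lam * ‖f‖ ^ 2 := fun f => by
    refine (W.abs_inner_markovOperator_le f).trans ?_
    rw [W.inner_markovOperator_self, ← lp.norm_toNorm (x := f)]
    have hK' := hK (lp.toNorm f)
    rw [← inv_mul_le_iff₀ hK₀] at hK'
    calc ‖lp.toNorm f‖ ^ 2 - dirichletForm μ T (lp.toNorm f) / 2
        ≤ (1 - (2 * K)⁻¹) * ‖lp.toNorm f‖ ^ 2 := by
          rw [mul_inv]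
          linarith
      _ ≤ _ := by
          gcongr
          exact le_max_right _ _
  have hnorm : ‖markovOperator μ T‖ ≤ lam := by
    rw [ContinuousLinearMap.norm_eq_iSup_rayleighQuotient _ W.isSymmetric_markovOperator]
    refine ciSup_le fun f => ?_
    rw [ContinuousLinearMap.rayleighQuotient, abs_div, abs_sq]
    exact div_le_of_le_mul₀ (sq_nonneg _) hlam.le (hform f)
  exact ⟨lam, W, hlam, max_lt (by norm_num) (by linarith [inv_pos.2 (mul_pos two_pos hK₀)]),
    fun n g => (W.convPow_le_norm_pow n g).trans (pow_le_pow_left₀ (norm_nonneg _) hnorm n)⟩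

end SpectralGap

/-! ### The Green function -/

section Green

variable {μ : G → ℝ} {T : Finset G} {lam : ℝ}

theorem greenFn_mul_left (μ : G → ℝ) (g x y : G) : greenFn μ (g * x) (g * y) = greenFn μ x y := by
  simp only [greenFn, mul_inv_rev, mul_assoc, inv_mul_cancel_left]

theorem greenFn_self (μ : G → ℝ) (x : G) : greenFn μ x x = greenFn μ 1 1 := by
  simpa using greenFn_mul_left μ x 1 1

/-- The part of the Green function coming from the times `≥ n`. -/
def greenTail (μ : G → ℝ) (n : ℕ) (x y : G) : ℝ := ∑' k : ℕ, convPow μ (k + n) (x⁻¹ * y)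

theorem greenTail_zero (μ : G → ℝ) (x y : G) : greenTail μ 0 x y = greenFn μ x y := rfl

theorem tendsto_greenTail (μ : G → ℝ) (x y : G) :
    Tendsto (fun n => greenTail μ n x y) atTop (𝓝 0) :=
  tendsto_sum_nat_add fun n => convPow μ n (x⁻¹ * y)

theorem Generates.exists_le_pow_wordLength {S : Finset G} (hS : Generates S) {q : G → ℝ}
    (hq : ∀ g, 0 ≤ q g) (hone : q 1 ≤ 1) (hmul : ∀ g h, q (g * h) ≤ q g * q h) :
    ∃ Λ, 1 ≤ Λ ∧ ∀ g, q g ≤ Λ ^ wordLength S g := by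
  set Λ : ℝ := 1 + ∑ s ∈ S, (q s + q s⁻¹)
  have hterm : ∀ s ∈ S, 0 ≤ q s + q s⁻¹ := fun s _ => add_nonneg (hq s) (hq s⁻¹)
  have hΛ : 1 ≤ Λ := le_add_of_nonneg_right (Finset.sum_nonneg hterm)
  have hgen : ∀ a, a ∈ S ∨ a⁻¹ ∈ S → q a ≤ Λ := by
    rintro a (ha | ha)
    · linarith [Finset.single_le_sum hterm ha, hq a⁻¹]
    · have := Finset.single_le_sum hterm ha
      rw [inv_inv] at this
      linarith [hq a⁻¹]
  refine ⟨Λ, hΛ, fun g => ?_⟩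
  obtain ⟨l, hlen, hl, rfl⟩ := hS.exists_list_length_eq g
  rw [← hlen]
  clear hlen
  induction l with
  | nil => simpa using hone
  | cons a l ih =>
    rw [List.forall_mem_cons] at hl
    rw [List.prod_cons, List.length_cons, pow_succ']
    exact (hmul a l.prod).trans (mul_le_mul (hgen a hl.1) (ih hl.2) (hq _) (by linarith))

namespace HasSpectralGap

theorem summable_convPow (W : HasSpectralGap μ T lam) (g : G) :
    Summable fun n => convPow μ n g :=
  (summable_geometric_of_lt_one W.rate_pos.le W.rate_lt_one).of_nonneg_of_le
    (fun n => W.convPow_nonneg n g) fun n => W.convPow_le n g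

theorem summable_convPow_add (W : HasSpectralGap μ T lam) (n : ℕ) (g : G) :
    Summable fun k => convPow μ (k + n) g :=
  (summable_nat_add_iff n).2 (W.summable_convPow g)

theorem greenFn_comm (W : HasSpectralGap μ T lam) (x y : G) : greenFn μ x y = greenFn μ y x := by
  refine tsum_congr fun n => ?_
  rw [← W.convPow_inv, mul_inv_rev, inv_inv]

theorem greenFn_pos (W : HasSpectralGap μ T lam) (x y : G) : 0 < greenFn μ x y := by
  obtain ⟨l, -, hl, hprod⟩ := W.generates.exists_list_length_eq (x⁻¹ * y)
  have hpos := W.convPow_prod_pos fun a ha => (hl a ha).elim id fun h => inv_inv a ▸ W.inv_mem h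
  rw [hprod] at hpos
  exact hpos.trans_le ((W.summable_convPow _).le_tsum _ fun n _ => W.convPow_nonneg n _)

theorem sum_mul_greenTail (W : HasSpectralGap μ T lam) (n : ℕ) (x y : G) :
    ∑ s ∈ T, μ s * greenTail μ n x (y * s) = greenTail μ (n + 1) x y := by
  simp only [greenTail, ← tsum_mul_left]
  rw [← Summable.tsum_finsetSum fun s _ => (W.summable_convPow_add n _).mul_left _]
  refine tsum_congr fun k => ?_
  rw [← add_assoc, W.convPow_succ]
  simp only [mul_assoc]

theorem greenTail_nonneg (W : HasSpectralGap μ T lam) (n : ℕ) (x y : G) :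
    0 ≤ greenTail μ n x y :=
  tsum_nonneg fun _ => W.convPow_nonneg _ _

theorem greenTail_le (W : HasSpectralGap μ T lam) (n : ℕ) (x y : G) :
    greenTail μ n x y ≤ lam ^ n * (1 - lam)⁻¹ := by
  have hgeom := summable_geometric_of_lt_one W.rate_pos.le W.rate_lt_one
  rw [← tsum_geometric_of_lt_one W.rate_pos.le W.rate_lt_one, ← tsum_mul_left]
  refine Summable.tsum_le_tsum (fun k => ?_) (W.summable_convPow_add n _) (hgeom.mul_left _)
  rw [← pow_add, add_comm n k]
  exact W.convPow_le _ _

theorem greenFn_eq_add_sum (W : HasSpectralGap μ T lam) [DecidableEq G] (x y : G) :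
    greenFn μ x y = (if x = y then 1 else 0) + ∑ s ∈ T, μ s * greenFn μ x (y * s) := by
  have := W.sum_mul_greenTail 0 x y
  simp only [greenTail_zero, zero_add] at this
  rw [this]
  refine (W.summable_convPow _).tsum_eq_zero_add.trans ?_
  rw [convPow_zero]
  simp only [inv_mul_eq_one, greenTail]

theorem sum_mul_greenFn_le (W : HasSpectralGap μ T lam) (x y : G) :
    ∑ s ∈ T, μ s * greenFn μ x (y * s) ≤ greenFn μ x y := by
  classical
  rw [W.greenFn_eq_add_sum x y]
  exact le_add_of_nonneg_left (by positivity)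

theorem nonpos_of_subharmonic_of_le_greenFn (W : HasSpectralGap μ T lam) {φ : G → ℝ}
    (hsub : ∀ x, φ x ≤ ∑ s ∈ T, μ s * φ (x * s)) {a : ℝ} {w : G}
    (hle : ∀ x, φ x ≤ a * greenFn μ w x) (x : G) : φ x ≤ 0 := by
  have htail : ∀ n x, φ x ≤ a * greenTail μ n w x := by
    intro n
    induction n with
    | zero => exact hle
    | succ n ih =>
      intro x
      calc φ x ≤ ∑ s ∈ T, μ s * φ (x * s) := hsub x
        _ ≤ ∑ s ∈ T, μ s * (a * greenTail μ n w (x * s)) := by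
          gcongr with s
          · exact W.nonneg s
          · exact ih _
        _ = a * greenTail μ (n + 1) w x := by
          rw [← W.sum_mul_greenTail, Finset.mul_sum]
          exact Finset.sum_congr rfl fun s _ => mul_left_comm _ _ _
  simpa using ge_of_tendsto' ((tendsto_greenTail μ w x).const_mul a) fun n => htail n x

/-- The positive part of `(u w / greenFn μ 1 1) * greenFn μ w - u` is subharmonic: away from `w`
because `greenFn μ w` is harmonic there, and at `w` because it vanishes. -/
theorem greenFn_mul_le_of_superharmonic (W : HasSpectralGap μ T lam) {u : G → ℝ}
    (hu : ∀ x, 0 ≤ u x) (hsuper : ∀ x, ∑ s ∈ T, μ s * u (x * s) ≤ u x) (w x : G) :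
    greenFn μ w x * u w ≤ greenFn μ 1 1 * u x := by
  classical
  have hone := W.greenFn_pos (1 : G) 1
  set a := u w / greenFn μ 1 1
  have ha : 0 ≤ a := div_nonneg (hu w) hone.le
  have hsub : ∀ x, max (a * greenFn μ w x - u x) 0 ≤
      ∑ s ∈ T, μ s * max (a * greenFn μ w (x * s) - u (x * s)) 0 := by
    intro x
    have hright : 0 ≤ ∑ s ∈ T, μ s * max (a * greenFn μ w (x * s) - u (x * s)) 0 :=
      Finset.sum_nonneg fun s _ => mul_nonneg (W.nonneg s) (le_max_right _ _)
    refine max_le ?_ hright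
    rcases eq_or_ne w x with rfl | hne
    · rwa [greenFn_self, div_mul_cancel₀ _ hone.ne', sub_self]
    calc a * greenFn μ w x - u x
        ≤ a * ∑ s ∈ T, μ s * greenFn μ w (x * s) - ∑ s ∈ T, μ s * u (x * s) := by
          rw [W.greenFn_eq_add_sum w x, if_neg hne, zero_add]
          exact sub_le_sub_left (hsuper x) _
      _ = ∑ s ∈ T, μ s * (a * greenFn μ w (x * s) - u (x * s)) := by
          simp only [mul_sub, Finset.sum_sub_distrib, Finset.mul_sum, mul_left_comm a]
      _ ≤ _ := by
          gcongr with s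
          · exact W.nonneg s
          · exact le_max_left _ _
  have hle := W.nonpos_of_subharmonic_of_le_greenFn hsub (a := a) (w := w) (fun x =>
    max_le (sub_le_self _ (hu x)) (mul_nonneg ha (W.greenFn_pos w x).le)) x
  have := sub_nonpos.1 ((le_max_left _ _).trans hle)
  rw [div_mul_eq_mul_div, div_le_iff₀ hone] at this
  linarith

theorem greenFn_mul_greenFn_le (W : HasSpectralGap μ T lam) (x w y : G) :
    greenFn μ x w * greenFn μ w y ≤ greenFn μ 1 1 * greenFn μ x y := by
  rw [mul_comm]
  exact W.greenFn_mul_le_of_superharmonic (fun y => (W.greenFn_pos x y).le)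
    (W.sum_mul_greenFn_le x) w y

theorem exists_harnack (W : HasSpectralGap μ T lam) {S : Finset G} (hS : Generates S) :
    ∃ Λ : ℝ, 1 ≤ Λ ∧
      ∀ x x' y, greenFn μ x y ≤ Λ ^ wordLength S (x⁻¹ * x') * greenFn μ x' y := by
  have hpos := W.greenFn_pos
  have hmul : ∀ g h, greenFn μ 1 1 / greenFn μ 1 (g * h) ≤
      greenFn μ 1 1 / greenFn μ 1 g * (greenFn μ 1 1 / greenFn μ 1 h) := fun g h => by
    have := W.greenFn_mul_greenFn_le 1 g (g * h)
    have hgh : greenFn μ g (g * h) = greenFn μ 1 h := by simpa using greenFn_mul_left μ g 1 h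
    rw [hgh] at this
    rw [div_mul_div_comm, div_le_div_iff₀ (hpos _ _) (mul_pos (hpos _ _) (hpos _ _)), mul_assoc]
    exact mul_le_mul_of_nonneg_left this (hpos _ _).le
  obtain ⟨Λ, hΛ, hle⟩ := hS.exists_le_pow_wordLength (fun g => (div_pos (hpos 1 1) (hpos 1 g)).le)
    (div_self_le_one _) hmul
  refine ⟨Λ, hΛ, fun x x' y => ?_⟩
  have hq := hle (x⁻¹ * x')
  have hshift : greenFn μ 1 (x⁻¹ * x') = greenFn μ x' x := by
    rw [W.greenFn_comm x', ← greenFn_mul_left μ x 1, mul_one, mul_inv_cancel_left]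
  rw [hshift] at hq
  calc greenFn μ x y ≤ greenFn μ 1 1 / greenFn μ x' x * greenFn μ x' y := by
        rw [div_mul_eq_mul_div, le_div_iff₀' (hpos _ _)]
        exact W.greenFn_mul_greenFn_le x' x y
    _ ≤ _ := mul_le_mul_of_nonneg_right hq (hpos _ _).le

theorem exists_greenFn_le (W : HasSpectralGap μ T lam) {S : Finset G} (hS : Generates S) {η : ℝ}
    (hη : 0 < η) : ∃ N : ℕ, ∀ x y, N ≤ wordLength S (x⁻¹ * y) → greenFn μ x y ≤ η := by
  have hlim : Tendsto (fun n : ℕ => lam ^ n * (1 - lam)⁻¹) atTop (𝓝 0) := by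
    simpa using (tendsto_pow_atTop_nhds_zero_of_lt_one W.rate_pos.le W.rate_lt_one).mul_const
      (1 - lam)⁻¹
  obtain ⟨n, hn⟩ := (hlim.eventually_le_const hη).exists
  obtain ⟨r, hr⟩ : ∃ r, ∀ s ∈ T, wordLength S s ≤ r :=
    ⟨T.sup (wordLength S), fun s hs => Finset.le_sup hs⟩
  refine ⟨n * r + 1, fun x y hxy => ?_⟩
  have htail : greenFn μ x y = greenTail μ n x y := by
    rw [greenFn, greenTail, ← (W.summable_convPow _).sum_add_tsum_nat_add n, add_eq_right]
    refine Finset.sum_eq_zero fun i hi => W.convPow_eq_zero hS hr ?_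
    have := Nat.mul_le_mul_right r (Finset.mem_range.1 hi).le
    omega
  exact htail.trans_le ((W.greenTail_le n x y).trans hn)

end HasSpectralGap

end Green

/-! ### Chains and time spent in balls -/

/-- **Frink's metrization lemma**: a quasi-ultrametric with constant at most `√2` is comparable to
the largest pseudometric below it. -/
theorem le_two_mul_sum_of_quasiUltrametric {X : Type*} {ρ : X → X → NNReal}
    (hself : ∀ x, ρ x x = 0) (hcomm : ∀ x y, ρ x y = ρ y x) {K : NNReal} (hK : 1 ≤ K)
    (hKK : K ^ 2 ≤ 2) (hρ : ∀ x y z, ρ x z ≤ K * max (ρ x y) (ρ y z)) (p : ℕ → X) (N : ℕ) :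
    ρ (p 0) (p N) ≤ 2 * ∑ i ∈ Finset.range N, ρ (p i) (p (i + 1)) := by
  have hfour : ∀ x₁ x₂ x₃ x₄, ρ x₁ x₄ ≤ 2 * max (ρ x₁ x₂) (max (ρ x₂ x₃) (ρ x₃ x₄)) := by
    intro x₁ x₂ x₃ x₄
    set M := max (ρ x₁ x₂) (max (ρ x₂ x₃) (ρ x₃ x₄))
    calc ρ x₁ x₄ ≤ K * max (ρ x₁ x₂) (ρ x₂ x₄) := hρ _ _ _
      _ ≤ K * (K * M) := by
        gcongr
        refine max_le ((le_max_left _ _).trans (le_mul_of_one_le_left' hK)) ((hρ x₂ x₃ x₄).trans ?_)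
        gcongr
        exact le_max_right _ _
      _ = K ^ 2 * M := by ring
      _ ≤ 2 * M := by gcongr
  let _ : PseudoMetricSpace X := .ofPreNNDist ρ hself hcomm
  have hle : (ρ (p 0) (p N) : ℝ) ≤ 2 * ∑ i ∈ Finset.range N, (ρ (p i) (p (i + 1)) : ℝ) :=
    calc (ρ (p 0) (p N) : ℝ) ≤ 2 * dist (p 0) (p N) :=
          PseudoMetricSpace.le_two_mul_dist_ofPreNNDist ρ hself hcomm hfour _ _
      _ ≤ 2 * ∑ i ∈ Finset.range N, dist (p i) (p (i + 1)) := by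
          gcongr
          exact dist_le_range_sum_dist p N
      _ ≤ _ := by
          gcongr
          exact PseudoMetricSpace.dist_ofPreNNDist_le ρ hself hcomm _ _
  exact_mod_cast hle

section VisualQuasimetric

variable {X : Type*} {d : X → X → ℝ} {δ ε : ℝ}

open scoped Classical in
/-- The visual quasi-metric `exp (-ε (x|y)_w)` on the points of `X` seen from `w`, set to `0` on the
diagonal. -/
def visualQuasimetric (d : X → X → ℝ) (ε : ℝ) (w x y : X) : NNReal :=
  if x = y then 0 else Real.toNNReal (Real.exp (-ε * gromov d w x y))

theorem coe_visualQuasimetric_of_ne (w : X) {x y : X} (h : x ≠ y) :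
    (visualQuasimetric d ε w x y : ℝ) = Real.exp (-ε * gromov d w x y) := by
  rw [visualQuasimetric, if_neg h, Real.coe_toNNReal _ (Real.exp_pos _).le]

theorem visualQuasimetric_self (w x : X) : visualQuasimetric d ε w x x = 0 := if_pos rfl

theorem coe_visualQuasimetric_le (w x y : X) :
    (visualQuasimetric d ε w x y : ℝ) ≤ Real.exp (-ε * gromov d w x y) := by
  rcases eq_or_ne x y with rfl | h
  · rw [visualQuasimetric_self]
    exact (Real.exp_pos _).le
  · exact (coe_visualQuasimetric_of_ne w h).le

theorem IsMetricFun.visualQuasimetric_comm (hd : IsMetricFun d) (w x y : X) :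
    visualQuasimetric d ε w x y = visualQuasimetric d ε w y x := by
  rcases eq_or_ne x y with rfl | h
  · rfl
  · rw [visualQuasimetric, visualQuasimetric, if_neg h, if_neg h.symm, hd.gromov_comm]

theorem IsHyperbolicWith.visualQuasimetric_le (hδ : IsHyperbolicWith d δ) (hd : IsMetricFun d)
    (hε : 0 < ε) {K : NNReal} (hK : Real.exp (ε * δ) ≤ K) (w x y z : X) :
    visualQuasimetric d ε w x z ≤
      K * max (visualQuasimetric d ε w x y) (visualQuasimetric d ε w y z) := by
  have hone : 1 ≤ K := by
    exact_mod_cast (Real.one_le_exp (mul_nonneg hε.le (hδ.nonneg w))).trans hK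
  rcases eq_or_ne x z with rfl | hxz
  · simp only [visualQuasimetric_self, zero_le]
  rcases eq_or_ne x y with rfl | hxy
  · exact (le_max_right _ _).trans (le_mul_of_one_le_left' hone)
  rcases eq_or_ne y z with rfl | hyz
  · exact (le_max_left _ _).trans (le_mul_of_one_le_left' hone)
  rw [← NNReal.coe_le_coe, NNReal.coe_mul, NNReal.coe_max, coe_visualQuasimetric_of_ne w hxz,
    coe_visualQuasimetric_of_ne w hxy, coe_visualQuasimetric_of_ne w hyz]
  have hprod := hδ w y x z
  rw [hd.gromov_comm w y x] at hprod
  have hexp : ∀ t, t - δ ≤ gromov d w x z →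
      Real.exp (-ε * gromov d w x z) ≤ K * Real.exp (-ε * t) := fun t ht =>
    calc Real.exp (-ε * gromov d w x z) ≤ Real.exp (ε * δ) * Real.exp (-ε * t) := by
          rw [← Real.exp_add, Real.exp_le_exp]
          nlinarith
      _ ≤ K * Real.exp (-ε * t) := by gcongr
  rcases min_choice (gromov d w x y) (gromov d w y z) with h | h <;> rw [h] at hprod
  · refine (hexp _ hprod).trans ?_
    gcongr
    exact le_max_left _ _
  · refine (hexp _ hprod).trans ?_
    gcongr
    exact le_max_right _ _

theorem IsHyperbolicWith.exp_neg_gromov_le_sum (hδ : IsHyperbolicWith d δ) (hd : IsMetricFun d)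
    (hε : 0 < ε) (hεδ : Real.exp (ε * δ) ^ 2 ≤ 2) (w : X) {p : ℕ → X} {N : ℕ} {r : ℝ}
    (hr : 0 ≤ r) (hp : ∀ i < N, d (p i) (p (i + 1)) ≤ r) :
    Real.exp (-ε * gromov d w (p 0) (p N)) ≤
      2 * Real.exp (ε * r) * ∑ i ∈ Finset.range (N + 1), Real.exp (-ε * d (p i) w) := by
  rcases eq_or_ne (p 0) (p N) with h | h
  · rw [← h, hd.gromov_self]
    have hsingle := Finset.single_le_sum (f := fun i => Real.exp (-ε * d (p i) w))
      (fun i _ => (Real.exp_pos _).le) (Finset.mem_range.2 N.succ_pos)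
    exact hsingle.trans (le_mul_of_one_le_left (by positivity)
      (by linarith [Real.one_le_exp (mul_nonneg hε.le hr)]))
  let K : NNReal := ⟨Real.exp (ε * δ), (Real.exp_pos _).le⟩
  have hchain := le_two_mul_sum_of_quasiUltrametric (K := K) (visualQuasimetric_self w)
    (hd.visualQuasimetric_comm w) (Real.one_le_exp (mul_nonneg hε.le (hδ.nonneg w))) hεδ
    (hδ.visualQuasimetric_le hd hε le_rfl w) p N
  have hterm : ∀ i ∈ Finset.range N, (visualQuasimetric d ε w (p i) (p (i + 1)) : ℝ) ≤
      Real.exp (ε * r) * Real.exp (-ε * d (p i) w) := fun i hi => by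
    refine (coe_visualQuasimetric_le w _ _).trans ?_
    rw [← Real.exp_add, Real.exp_le_exp]
    have hsplit := hd.gromov_add_gromov w (p i) (p (i + 1))
    have hle := hd.gromov_le_right (p i) w (p (i + 1))
    rw [hd.symm] at hle
    nlinarith [hp i (Finset.mem_range.1 hi)]
  calc Real.exp (-ε * gromov d w (p 0) (p N)) = visualQuasimetric d ε w (p 0) (p N) :=
        (coe_visualQuasimetric_of_ne w h).symm
    _ ≤ 2 * ∑ i ∈ Finset.range N, (visualQuasimetric d ε w (p i) (p (i + 1)) : ℝ) := by
        exact_mod_cast hchain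
    _ ≤ 2 * ∑ i ∈ Finset.range N, Real.exp (ε * r) * Real.exp (-ε * d (p i) w) := by
        gcongr with i hi
        exact hterm i hi
    _ = 2 * Real.exp (ε * r) * ∑ i ∈ Finset.range N, Real.exp (-ε * d (p i) w) := by
        rw [← Finset.mul_sum, mul_assoc]
    _ ≤ _ := by
        rw [Finset.sum_range_succ]
        gcongr
        exact le_add_of_nonneg_right (Real.exp_pos _).le

end VisualQuasimetric

theorem exists_pos_exp_mul_sq_le_two {δ : ℝ} (hδ : 0 ≤ δ) :
    ∃ ε : ℝ, 0 < ε ∧ Real.exp (ε * δ) ^ 2 ≤ 2 := by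
  refine ⟨Real.log 2 / (2 * (δ + 1)), by positivity, ?_⟩
  rw [← Real.exp_nat_mul, Nat.cast_ofNat, ← Real.le_log_iff_exp_le two_pos,
    div_mul_eq_mul_div, ← mul_div_assoc, div_le_iff₀ (by positivity)]
  nlinarith [Real.log_pos one_lt_two]

theorem hasSum_sub_mul_pow {q : ℝ} (hq0 : 0 ≤ q) (hq1 : q < 1) (n : ℕ) :
    HasSum (fun m : ℕ => ((m - n : ℕ) : ℝ) * q ^ m) (q ^ n * (q / (1 - q) ^ 2)) := by
  have hbase := (hasSum_coe_mul_geometric_of_norm_lt_one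
    (by rwa [Real.norm_of_nonneg hq0])).mul_left (q ^ n)
  rw [← hasSum_nat_add_iff' n, Finset.sum_eq_zero fun i hi => by
    rw [Nat.sub_eq_zero_of_le (Finset.mem_range.1 hi).le, Nat.cast_zero, zero_mul], sub_zero]
  refine hbase.congr_fun fun m => ?_
  rw [Nat.add_sub_cancel, pow_add]
  ring

theorem sum_pow_le_of_card_filter_le {ι : Type*} {I : Finset ι} {D : ι → ℕ} {f : ℕ → ℝ}
    {q a : ℝ} (hq : 0 ≤ q) (hcard : ∀ m, (({i ∈ I | D i ≤ m} : Finset ι).card : ℝ) ≤ f m)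
    (hsum : HasSum (fun m => f m * q ^ m) a) : ∑ i ∈ I, q ^ D i ≤ a := by
  have hf : ∀ m, 0 ≤ f m := fun m => (Nat.cast_nonneg _).trans (hcard m)
  calc ∑ i ∈ I, q ^ D i = ∑ m ∈ I.image D, ∑ i ∈ I with D i = m, q ^ D i :=
        (Finset.sum_fiberwise_of_maps_to (fun i hi => Finset.mem_image_of_mem D hi) _).symm
    _ ≤ ∑ m ∈ I.image D, f m * q ^ m := by
        gcongr with m
        rw [Finset.sum_congr rfl fun i hi => by rw [(Finset.mem_filter.1 hi).2], Finset.sum_const,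
          nsmul_eq_mul]
        refine mul_le_mul_of_nonneg_right (le_trans ?_ (hcard m)) (pow_nonneg hq m)
        gcongr with i
        exact Eq.le
    _ ≤ a := sum_le_hasSum _ (fun m _ => mul_nonneg (hf m) (pow_nonneg hq m)) hsum

theorem exists_lt_card_filter {q b : ℝ} (hq0 : 0 ≤ q) (hq1 : q < 1) (hb : 0 < b) (A : ℕ) :
    ∃ n : ℕ, ∀ (I : Finset ℕ) (D : ℕ → ℕ), b ≤ ∑ i ∈ I, q ^ D i →
      ∃ m, A * (m - n) < ({i ∈ I | D i ≤ m} : Finset ℕ).card := by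
  have hlim : Tendsto (fun n : ℕ => (A : ℝ) * (q ^ n * (q / (1 - q) ^ 2))) atTop (𝓝 0) := by
    simpa using ((tendsto_pow_atTop_nhds_zero_of_lt_one hq0 hq1).mul_const _).const_mul (A : ℝ)
  obtain ⟨n, hn⟩ := (hlim.eventually_lt_const hb).exists
  refine ⟨n, fun I D hI => ?_⟩
  by_contra! hcard
  have hsum := (hasSum_sub_mul_pow hq0 hq1 n).mul_left (A : ℝ)
  simp only [← mul_assoc] at hsum hn
  refine (hI.trans (sum_pow_le_of_card_filter_le hq0 (fun m => ?_) hsum)).not_gt hn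
  exact_mod_cast hcard m

theorem exists_append_of_lt_card_take {α : Type*} {l : List α} {P : List α → Prop}
    [DecidablePred P] {k : ℕ}
    (hk : k < ({i ∈ Finset.range (l.length + 1) | P (l.take i)} : Finset ℕ).card) :
    ∃ l₁ l₂ l₃ : List α, l₁ ++ l₂ ++ l₃ = l ∧ P l₁ ∧ P (l₁ ++ l₂) ∧ k ≤ l₂.length := by
  set J := {i ∈ Finset.range (l.length + 1) | P (l.take i)}
  have hne : J.Nonempty := Finset.card_pos.1 (by omega)
  obtain ⟨hi, hPi⟩ := Finset.mem_filter.1 (J.min'_mem hne)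
  obtain ⟨hj, hPj⟩ := Finset.mem_filter.1 (J.max'_mem hne)
  have hcard : J.card ≤ J.max' hne + 1 - J.min' hne := by
    rw [← Nat.card_Icc]
    exact Finset.card_le_card fun k hk => Finset.mem_Icc.2 ⟨J.min'_le k hk, J.le_max' k hk⟩
  have hij := J.min'_le _ (J.max'_mem hne)
  set i := J.min' hne
  set j := J.max' hne
  rw [Finset.mem_range] at hj
  have htake : l.take i ++ (l.take j).drop i = l.take j := by
    rw [← min_eq_left hij, ← List.take_take, min_eq_left hij, List.take_append_drop]
  refine ⟨l.take i, (l.take j).drop i, l.drop j, ?_, hPi, htake.symm ▸ hPj, ?_⟩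
  · rw [htake, List.take_append_drop]
  · rw [List.length_drop, List.length_take]
    omega

theorem IsHyperbolicWith.exists_path_splitting {S : Finset G} {δ : ℝ}
    (hδ : IsHyperbolicWith (wordDist S) δ) (hS : Generates S) (c : ℝ) (A r : ℕ) :
    ∃ n : ℕ, ∀ (a : G) (l : List G), (∀ s ∈ l, wordLength S s ≤ r) →
      gromov (wordDist S) 1 a (a * l.prod) ≤ c →
      ∃ (m : ℕ) (l₁ l₂ l₃ : List G), l₁ ++ l₂ ++ l₃ = l ∧ wordLength S (a * l₁.prod) ≤ m ∧
        wordLength S (a * (l₁ ++ l₂).prod) ≤ m ∧ A * (m - n) ≤ l₂.length := by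
  obtain ⟨ε, hε, hεδ⟩ := exists_pos_exp_mul_sq_le_two (hδ.nonneg 1)
  obtain ⟨n, hn⟩ := exists_lt_card_filter (b := Real.exp (-ε * c) / (2 * Real.exp (ε * r)))
    (Real.exp_pos (-ε)).le (Real.exp_lt_one_iff.2 (neg_lt_zero.2 hε)) (by positivity) A
  refine ⟨n, fun a l hl hc => ?_⟩
  have hstep : ∀ i < l.length,
      wordDist S (a * (l.take i).prod) (a * (l.take (i + 1)).prod) ≤ r := fun i hi => by
    rw [List.prod_take_succ _ _ hi, ← mul_assoc, wordDist_self_mul]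
    exact_mod_cast hl _ (List.getElem_mem hi)
  have hchain := hδ.exp_neg_gromov_le_sum hS.isMetricFun_wordDist hε hεδ 1 r.cast_nonneg hstep
  rw [List.take_zero, List.prod_nil, mul_one, List.take_length] at hchain
  obtain ⟨m, hm⟩ := hn (Finset.range (l.length + 1))
      (fun i => wordLength S (a * (l.take i).prod)) <| by
    rw [div_le_iff₀' (by positivity)]
    simp only [hS.wordDist_one_right] at hchain
    simp only [← Real.exp_nat_mul, mul_comm _ (-ε)]
    exact (Real.exp_le_exp.2 (by nlinarith)).trans hchain
  exact ⟨m, exists_append_of_lt_card_take (P := fun l' => wordLength S (a * l'.prod) ≤ m) hm⟩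

/-! ### Sums over paths and the Ancona inequality -/

section PathMass

variable {α : Type*}

/-- The probability that the first increments of the random walk are the entries of `l`. -/
def pathWeight (μ : α → ℝ) (l : List α) : ℝ≥0∞ := (l.map fun s => ENNReal.ofReal (μ s)).prod

/-- The total weight of a set of paths, each path being given by its list of increments. -/
def pathMass (μ : α → ℝ) (E : Set (List α)) : ℝ≥0∞ := ∑' l : E, pathWeight μ l

theorem pathMass_append_le (μ : α → ℝ) (E F : Set (List α)) :
    pathMass μ (image2 (· ++ ·) E F) ≤ pathMass μ E * pathMass μ F := by
  let append : E × F → image2 (· ++ ·) E F := fun p => ⟨p.1 ++ p.2, mem_image2_of_mem p.1.2 p.2.2⟩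
  have hsurj : Function.Surjective append := by
    rintro ⟨_, l, hl, l', hl', rfl⟩
    exact ⟨(⟨l, hl⟩, ⟨l', hl'⟩), rfl⟩
  refine (ENNReal.tsum_le_tsum_comp_of_surjective hsurj _).trans_eq ?_
  simp only [append, pathWeight, List.map_append, List.prod_append, pathMass]
  rw [ENNReal.tsum_prod']
  simp only [ENNReal.tsum_mul_left, ENNReal.tsum_mul_right]

theorem pathMass_image_cons (μ : α → ℝ) (s : α) (E : Set (List α)) :
    pathMass μ (List.cons s '' E) = ENNReal.ofReal (μ s) * pathMass μ E := by
  rw [pathMass, tsum_image _ (List.cons_injective.injOn), pathMass, ← ENNReal.tsum_mul_left]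
  simp only [pathWeight, List.map_cons, List.prod_cons]

end PathMass

section PathSums

variable {μ : G → ℝ} {T : Finset G} {lam : ℝ}

/-- The paths from `x` to `y` with increments in `T` and length in `I`, given by their lists of
increments. -/
def paths (T : Finset G) (I : Set ℕ) (x y : G) : Set (List G) :=
  {l | (∀ s ∈ l, s ∈ T) ∧ l.length ∈ I ∧ x * l.prod = y}

theorem paths_succ (T : Finset G) (n : ℕ) (x y : G) :
    paths T {n + 1} x y = ⋃ s ∈ T, List.cons s '' paths T {n} (x * s) y := by
  ext l
  cases l with
  | nil => simp [paths]
  | cons s l => simp [paths, mul_assoc, and_comm]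

theorem IsSymmetricWalk.pathMass_paths_singleton (W : IsSymmetricWalk μ T) (n : ℕ) (x y : G) :
    pathMass μ (paths T {n} x y) = ENNReal.ofReal (convPow μ n (x⁻¹ * y)) := by
  classical
  induction n generalizing x with
  | zero =>
    rw [convPow_zero, inv_mul_eq_one]
    split_ifs with h
    · have : paths T {0} x y = {[]} := by
        ext l
        simp only [paths, Set.mem_ofPred_eq, mem_singleton_iff, List.length_eq_zero_iff, h]
        exact ⟨fun hl => hl.2.1, by rintro rfl; simp⟩
      rw [this, pathMass, tsum_singleton]
      simp [pathWeight]
    · have : paths T {0} x y = ∅ := by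
        ext l
        simp +contextual [paths, List.length_eq_zero_iff, h]
      rw [this, pathMass, tsum_empty, ENNReal.ofReal_zero]
  | succ n ih =>
    have hdisj : (T : Set G).Pairwise
        (Function.onFun Disjoint fun s => List.cons s '' paths T {n} (x * s) y) := by
      intro s _ t _ hst
      rw [Function.onFun, Set.disjoint_left]
      rintro _ ⟨l, -, rfl⟩ ⟨l', -, h⟩
      exact hst (List.cons_eq_cons.1 h).1.symm
    rw [paths_succ, pathMass, Summable.tsum_finset_bUnion_disjoint hdisj
      fun _ _ => ENNReal.summable, W.convPow_succ_left, ← W.sum_inv,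
      ENNReal.ofReal_sum_of_nonneg fun s _ => mul_nonneg (W.nonneg _) (W.convPow_nonneg _ _)]
    refine Finset.sum_congr rfl fun s _ => ?_
    rw [← pathMass, pathMass_image_cons, ih, W.symm, ENNReal.ofReal_mul (W.nonneg s), mul_inv_rev,
      inv_inv, mul_assoc]

theorem HasSpectralGap.pathMass_paths_Ici (W : HasSpectralGap μ T lam) (n : ℕ) (x y : G) :
    pathMass μ (paths T (Ici n) x y) = ENNReal.ofReal (greenTail μ n x y) := by
  have hunion : paths T (Ici n) x y = ⋃ k, paths T {k + n} x y := by
    ext l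
    simp only [paths, mem_iUnion, Set.mem_ofPred_eq, exists_and_left, exists_and_right, mem_Ici,
      mem_singleton_iff, le_iff_exists_add']
  have hdisj : Set.univ.PairwiseDisjoint fun k => paths T {k + n} x y := by
    intro k _ k' _ hkk'
    rw [Function.onFun, Set.disjoint_left]
    rintro l ⟨-, h, -⟩ ⟨-, h', -⟩
    rw [mem_singleton_iff] at h h'
    omega
  rw [hunion, pathMass, ENNReal.tsum_biUnion hdisj, greenTail,
    ENNReal.ofReal_tsum_of_nonneg (fun _ => W.convPow_nonneg _ _) (W.summable_convPow_add n _)]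
  exact tsum_congr fun k => W.pathMass_paths_singleton _ _ _

theorem HasSpectralGap.pathMass_paths (W : HasSpectralGap μ T lam) (x y : G) :
    pathMass μ (paths T (Ici 0) x y) = ENNReal.ofReal (greenFn μ x y) :=
  W.pathMass_paths_Ici 0 x y

theorem HasSpectralGap.ofReal_greenFn_le_tsum (W : HasSpectralGap μ T lam) {B : ℕ → Finset G}
    {L : ℕ → ℕ} {a b : G} (hsplit : ∀ l ∈ paths T (Ici 0) a b, ∃ (m : ℕ) (l₁ l₂ l₃ : List G),
      l₁ ++ l₂ ++ l₃ = l ∧ a * l₁.prod ∈ B m ∧ a * (l₁ ++ l₂).prod ∈ B m ∧ L m ≤ l₂.length) :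
    ENNReal.ofReal (greenFn μ a b) ≤ ∑' m, ∑ u ∈ B m, ∑ v ∈ B m,
      ENNReal.ofReal (greenFn μ a u * greenTail μ (L m) u v * greenFn μ v b) := by
  let E : ℕ → G → G → Set (List G) := fun m u v => image2 (· ++ ·)
    (image2 (· ++ ·) (paths T (Ici 0) a u) (paths T (Ici (L m)) u v)) (paths T (Ici 0) v b)
  have hE : ∀ m u v, pathMass μ (E m u v) ≤
      ENNReal.ofReal (greenFn μ a u * greenTail μ (L m) u v * greenFn μ v b) := fun m u v => by
    have hau := (W.greenFn_pos a u).le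
    rw [ENNReal.ofReal_mul' (W.greenFn_pos v b).le, ENNReal.ofReal_mul hau, ← W.pathMass_paths,
      ← W.pathMass_paths_Ici, ← W.pathMass_paths]
    exact (pathMass_append_le _ _ _).trans (mul_le_mul_left (pathMass_append_le _ _ _) _)
  have hcover : paths T (Ici 0) a b ⊆ ⋃ m, ⋃ u ∈ B m, ⋃ v ∈ B m, E m u v := by
    intro l hl
    obtain ⟨m, l₁, l₂, l₃, rfl, hu, hv, hlen⟩ := hsplit l hl
    obtain ⟨hT, -, hprod⟩ := hl
    simp only [List.mem_append, or_imp, forall_and] at hT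
    simp only [mem_iUnion]
    exact ⟨m, _, hu, _, hv, _, ⟨l₁, ⟨hT.1.1, Nat.zero_le _, rfl⟩, l₂,
      ⟨hT.1.2, hlen, by rw [List.prod_append, mul_assoc]⟩, rfl⟩, l₃,
      ⟨hT.2, Nat.zero_le _, by rw [mul_assoc, ← List.prod_append, hprod]⟩, rfl⟩
  rw [← W.pathMass_paths]
  refine (ENNReal.tsum_mono_subtype _ hcover).trans ((ENNReal.tsum_iUnion_le_tsum _ _).trans ?_)
  refine ENNReal.tsum_le_tsum fun m => (ENNReal.tsum_biUnion_le _ _ _).trans ?_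
  refine Finset.sum_le_sum fun u _ => (ENNReal.tsum_biUnion_le _ _ _).trans ?_
  exact Finset.sum_le_sum fun v _ => hE m u v

theorem HasSpectralGap.greenFn_le_of_split (W : HasSpectralGap μ T lam) {B : ℕ → Finset G}
    {L : ℕ → ℕ} {a b : G} (hsplit : ∀ l ∈ paths T (Ici 0) a b, ∃ (m : ℕ) (l₁ l₂ l₃ : List G),
      l₁ ++ l₂ ++ l₃ = l ∧ a * l₁.prod ∈ B m ∧ a * (l₁ ++ l₂).prod ∈ B m ∧ L m ≤ l₂.length)
    {D : ℝ} (hD : ∀ m, ∑ u ∈ B m, ∑ v ∈ B m,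
      greenFn μ a u * greenTail μ (L m) u v * greenFn μ v b ≤ D * (1 / 2) ^ m) :
    greenFn μ a b ≤ D * 2 := by
  have hnonneg : ∀ m u v, 0 ≤ greenFn μ a u * greenTail μ (L m) u v * greenFn μ v b :=
    fun m u v => mul_nonneg (mul_nonneg (W.greenFn_pos a u).le (W.greenTail_nonneg _ u v))
      (W.greenFn_pos v b).le
  have hD0 : 0 ≤ D := by
    have := hD 0
    rw [pow_zero, mul_one] at this
    exact (Finset.sum_nonneg fun u _ => Finset.sum_nonneg fun v _ => hnonneg 0 u v).trans this
  have hsum := summable_geometric_two.mul_left D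
  rw [← ENNReal.ofReal_le_ofReal_iff (mul_nonneg hD0 zero_le_two), ← tsum_geometric_two,
    ← tsum_mul_left, ENNReal.ofReal_tsum_of_nonneg (fun m => by positivity) hsum]
  refine (W.ofReal_greenFn_le_tsum hsplit).trans (ENNReal.tsum_le_tsum fun m => ?_)
  simp only [← ENNReal.ofReal_sum_of_nonneg fun v _ => hnonneg m _ v]
  rw [← ENNReal.ofReal_sum_of_nonneg fun u _ => Finset.sum_nonneg fun v _ => hnonneg m u v]
  exact ENNReal.ofReal_le_ofReal (hD m)

theorem pow_mul_pow_sub_le {P q : ℝ} (hP : 1 ≤ P) (hq : 0 ≤ q) (hPq : P * q ≤ 1) (m n : ℕ) :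
    P ^ m * q ^ (m - n) ≤ P ^ n := by
  rcases le_total m n with h | h
  · rw [Nat.sub_eq_zero_of_le h, pow_zero, mul_one]
    exact pow_le_pow_right₀ hP h
  · obtain ⟨k, rfl⟩ := Nat.exists_eq_add_of_le h
    rw [Nat.add_sub_cancel_left, pow_add, mul_assoc, ← mul_pow]
    have hP0 : 0 ≤ P := zero_le_one.trans hP
    exact mul_le_of_le_one_right (pow_nonneg hP0 n) (pow_le_one₀ (mul_nonneg hP0 hq) hPq)

theorem HasSpectralGap.sum_ball_le (W : HasSpectralGap μ T lam) {S : Finset G} (hS : Generates S)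
    {Λ β : ℝ} (hΛ : 1 ≤ Λ) {m : ℕ}
    (hharnack : ∀ x x' y, greenFn μ x y ≤ Λ ^ wordLength S (x⁻¹ * x') * greenFn μ x' y)
    {B : Finset G} (hB : ∀ g ∈ B, wordLength S g ≤ m) (hcard : B.card ≤ β ^ m) (L : ℕ) (a b : G) :
    ∑ u ∈ B, ∑ v ∈ B, greenFn μ a u * greenTail μ L u v * greenFn μ v b ≤
      ((β * Λ) ^ 2) ^ m * (lam ^ L * (1 - lam)⁻¹) * (greenFn μ a 1 * greenFn μ 1 b) := by
  have hpos := W.greenFn_pos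
  have hmove : ∀ u ∈ B, ∀ y, greenFn μ u y ≤ Λ ^ m * greenFn μ 1 y := fun u hu y => by
    refine (hharnack u 1 y).trans (mul_le_mul_of_nonneg_right ?_ (hpos 1 y).le)
    rw [mul_one, hS.wordLength_inv]
    exact pow_le_pow_right₀ hΛ (hB u hu)
  have : 0 < Λ := zero_lt_one.trans_le hΛ
  have ha := hpos a 1
  have hb := hpos 1 b
  have hgap : 0 ≤ lam ^ L * (1 - lam)⁻¹ :=
    mul_nonneg (pow_nonneg W.rate_pos.le _) (inv_nonneg.2 (sub_nonneg.2 W.rate_lt_one.le))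
  have hterm : ∀ u ∈ B, ∀ v ∈ B, greenFn μ a u * greenTail μ L u v * greenFn μ v b ≤
      (Λ ^ m * greenFn μ a 1) * (lam ^ L * (1 - lam)⁻¹) * (Λ ^ m * greenFn μ 1 b) := by
    intro u hu v hv
    have hau : greenFn μ a u ≤ Λ ^ m * greenFn μ a 1 := by
      rw [W.greenFn_comm a u, W.greenFn_comm a 1]
      exact hmove u hu a
    have hvb := hpos v b
    have hnonneg := W.greenTail_nonneg L u v
    gcongr
    · exact W.greenTail_le L u v
    · exact hmove v hv b
  calc _ ≤ ∑ _u ∈ B, ∑ _v ∈ B,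
        (Λ ^ m * greenFn μ a 1) * (lam ^ L * (1 - lam)⁻¹) * (Λ ^ m * greenFn μ 1 b) :=
        Finset.sum_le_sum fun u hu => Finset.sum_le_sum fun v hv => hterm u hu v hv
    _ = (B.card : ℝ) ^ 2 * ((Λ ^ 2) ^ m * (lam ^ L * (1 - lam)⁻¹) *
        (greenFn μ a 1 * greenFn μ 1 b)) := by
        simp only [Finset.sum_const, nsmul_eq_mul]
        ring
    _ ≤ (β ^ m) ^ 2 * ((Λ ^ 2) ^ m * (lam ^ L * (1 - lam)⁻¹) *
        (greenFn μ a 1 * greenFn μ 1 b)) := by gcongr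
    _ = _ := by ring

theorem HasSpectralGap.exists_sum_ball_le_geometric (W : HasSpectralGap μ T lam) {S : Finset G}
    (hS : Generates S) : ∃ (A : ℕ) (P : ℝ), 0 < P ∧ ∀ (n m : ℕ) (a b : G) (B : Finset G),
      (∀ g, g ∈ B ↔ wordLength S g ≤ m) →
      ∑ u ∈ B, ∑ v ∈ B, greenFn μ a u * greenTail μ (A * (m - n)) u v * greenFn μ v b ≤
        P ^ n * (1 - lam)⁻¹ * (greenFn μ a 1 * greenFn μ 1 b) * (1 / 2) ^ m := by
  obtain ⟨β, hβ1, hβ⟩ := hS.exists_pow_card_bound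
  obtain ⟨Λ, hΛ, hharnack⟩ := W.exists_harnack hS
  set P := 2 * (β * Λ) ^ 2 with hPdef
  have hP : 1 ≤ P := by
    have : 1 ≤ (β * Λ) ^ 2 :=
      one_le_pow₀ (one_le_mul_of_one_le_of_one_le (Nat.one_le_cast.2 hβ1) hΛ)
    linarith
  obtain ⟨A, hA⟩ : ∃ A : ℕ, P * lam ^ A ≤ 1 := by
    have hlim := (tendsto_pow_atTop_nhds_zero_of_lt_one W.rate_pos.le W.rate_lt_one).const_mul P
    rw [mul_zero] at hlim
    exact (hlim.eventually_le_const one_pos).exists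
  refine ⟨A, P, by positivity, fun n m a b B hB => ?_⟩
  have hcard : (B.card : ℝ) ≤ β ^ m := by
    have : {g | wordLength S g ≤ m} = (B : Set G) := by ext; simp [hB]
    exact_mod_cast Set.ncard_coe_finset B ▸ this ▸ (hβ m).2
  refine (W.sum_ball_le hS hΛ hharnack (fun g => (hB g).1) hcard _ a b).trans ?_
  have hgap : 0 < (1 - lam)⁻¹ := inv_pos.2 (sub_pos.2 W.rate_lt_one)
  have hgab := mul_pos (W.greenFn_pos a 1) (W.greenFn_pos 1 b)
  calc _ = P ^ m * (lam ^ A) ^ (m - n) * (1 - lam)⁻¹ * (greenFn μ a 1 * greenFn μ 1 b) *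
        (1 / 2) ^ m := by
        rw [hPdef, mul_pow 2, pow_mul lam, div_pow, one_pow]
        field_simp
    _ ≤ _ := by
        gcongr
        exact pow_mul_pow_sub_le hP (pow_nonneg W.rate_pos.le A) hA m n

theorem HasSpectralGap.exists_ancona_one (W : HasSpectralGap μ T lam) {S : Finset G}
    (hS : Generates S) {δ : ℝ} (hδ : IsHyperbolicWith (wordDist S) δ) (c : ℝ) :
    ∃ C : ℝ, 0 < C ∧ ∀ a b, gromov (wordDist S) 1 a b ≤ c →
      greenFn μ a b ≤ C * (greenFn μ a 1 * greenFn μ 1 b) := by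
  obtain ⟨A, P, hP, hball⟩ := W.exists_sum_ball_le_geometric hS
  obtain ⟨n, hn⟩ := hδ.exists_path_splitting hS c A (T.sup (wordLength S))
  have hgap : 0 < (1 - lam)⁻¹ := inv_pos.2 (sub_pos.2 W.rate_lt_one)
  refine ⟨P ^ n * (1 - lam)⁻¹ * 2, by positivity, fun a b hab => ?_⟩
  refine (W.greenFn_le_of_split (B := fun m => (hS.finite_setOf_wordLength_le m).toFinset)
    (fun l hl => ?_) fun m => hball n m a b _ fun g => by simp).trans_eq (by ring)
  obtain ⟨hT, -, rfl⟩ := hl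
  simpa using hn a l (fun s hs => Finset.le_sup (f := wordLength S) (hT s hs)) hab

theorem HasSpectralGap.exists_ancona (W : HasSpectralGap μ T lam) {S : Finset G}
    (hS : Generates S) {δ : ℝ} (hδ : IsHyperbolicWith (wordDist S) δ) (c : ℝ) :
    ∃ C : ℝ, 0 < C ∧ ∀ w x y, gromov (wordDist S) w x y ≤ c →
      greenFn μ x y ≤ C * (greenFn μ x w * greenFn μ w y) := by
  obtain ⟨C, hC, hle⟩ := W.exists_ancona_one hS hδ c
  refine ⟨C, hC, fun w x y hxy => ?_⟩
  have := hle (w⁻¹ * x) (w⁻¹ * y) (by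
    rwa [← inv_mul_cancel w, (leftInvariant_wordDist S).gromov_mul_left])
  rwa [← inv_mul_cancel w, greenFn_mul_left, greenFn_mul_left, greenFn_mul_left] at this

end PathSums

/-! ### Convergence to a boundary point -/

section BoundaryFilter

/-- The trace on the group of the neighbourhood filter of the boundary point represented by `u`. -/
def boundaryFilter (d : G → G → ℝ) (u : ℕ → G) : Filter G :=
  ⨅ R : ℝ, 𝓟 {y | ∀ᶠ n in atTop, R ≤ gromov d 1 (u n) y}

variable {d : G → G → ℝ} {δ : ℝ} {u v : ℕ → G}

theorem hasBasis_boundaryFilter (d : G → G → ℝ) (u : ℕ → G) :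
    (boundaryFilter d u).HasBasis (fun _ : ℝ => True)
      fun R => {y | ∀ᶠ n in atTop, R ≤ gromov d 1 (u n) y} :=
  hasBasis_iInf_principal <| directed_of_isDirected_le fun _ _ hR _ hy =>
    hy.mono fun _ hn => hR.trans hn

theorem eventually_boundaryFilter (d : G → G → ℝ) (u : ℕ → G) (R : ℝ) :
    ∀ᶠ y in boundaryFilter d u, ∀ᶠ n in atTop, R ≤ gromov d 1 (u n) y :=
  (hasBasis_boundaryFilter d u).mem_of_mem trivial

theorem eventually_boundaryFilter_ne (hd : IsMetricFun d) (u : ℕ → G) (x : G) :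
    ∀ᶠ y in boundaryFilter d u, y ≠ x := by
  filter_upwards [eventually_boundaryFilter d u (d x 1 + 1)]
  rintro y hy rfl
  obtain ⟨n, hn⟩ := hy.exists
  linarith [hd.gromov_le_right 1 (u n) y]

theorem TendstoInfinity.eventually_le_gromov (hu : TendstoInfinity d u) (R : ℝ) :
    ∀ᶠ m in atTop, ∀ᶠ n in atTop, R ≤ gromov d 1 (u m) (u n) :=
  eventually_atTop_curry (hu.eventually_ge_atTop R)

theorem TendstoInfinity.eventually_le_gromov_of_eventually (hu : TendstoInfinity d u)
    (hδ : IsHyperbolicWith d δ) {R : ℝ} (hv : ∀ᶠ m in atTop, R + δ ≤ gromov d 1 (u m) (v m)) :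
    ∀ᶠ m in atTop, ∀ᶠ n in atTop, R ≤ gromov d 1 (u n) (v m) := by
  filter_upwards [hv, hu.eventually_le_gromov (R + δ)] with m hm hmn
  filter_upwards [hmn] with n hn
  linarith [hδ.sub_le_gromov hn hm]

theorem TendstoInfinity.tendsto_boundaryFilter (hu : TendstoInfinity d u)
    (hδ : IsHyperbolicWith d δ) (hv : Tendsto (fun n => gromov d 1 (u n) (v n)) atTop atTop) :
    Tendsto v atTop (boundaryFilter d u) :=
  (hasBasis_boundaryFilter d u).tendsto_right_iff.2 fun R _ =>
    hu.eventually_le_gromov_of_eventually hδ (hv.eventually_ge_atTop (R + δ))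

theorem TendstoInfinity.tendsto_boundaryFilter_self (hu : TendstoInfinity d u)
    (hδ : IsHyperbolicWith d δ) : Tendsto u atTop (boundaryFilter d u) :=
  hu.tendsto_boundaryFilter hδ (hu.comp tendsto_atTop_diagonal)

theorem TendstoInfinity.neBot_boundaryFilter (hu : TendstoInfinity d u)
    (hδ : IsHyperbolicWith d δ) : (boundaryFilter d u).NeBot :=
  (hu.tendsto_boundaryFilter_self hδ).neBot

/-- The sequence `w` follows, up to the error `t`, a geodesic ray from `1` to the limit of `F`. -/
structure IsRadialSequence (S : Finset G) (t : ℝ) (F : Filter G) (w : ℕ → G) : Prop where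
  wordLength_eq : ∀ k, wordLength S (w k) = k
  eventually_le_gromov : ∀ k : ℕ, ∀ᶠ y in F, k - t ≤ gromov (wordDist S) 1 (w k) y

variable {S : Finset G} {t : ℝ} {F : Filter G} {w : ℕ → G}

theorem IsRadialSequence.tendstoInfinity (hw : IsRadialSequence S t F w) (hS : Generates S)
    (hδ : IsHyperbolicWith (wordDist S) δ) [F.NeBot] : TendstoInfinity (wordDist S) w := by
  refine tendsto_atTop.2 fun R => eventually_atTop_prod_self'.2 ?_
  obtain ⟨N, hN⟩ := exists_nat_ge (R + t + δ)
  refine ⟨N, fun m hm n hn => ?_⟩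
  obtain ⟨y, hmy, hny⟩ :=
    ((hw.eventually_le_gromov m).and (hw.eventually_le_gromov n)).exists
  rw [hS.isMetricFun_wordDist.gromov_comm] at hmy hny
  have hNm : (N : ℝ) ≤ m := Nat.cast_le.2 hm
  have hNn : (N : ℝ) ≤ n := Nat.cast_le.2 hn
  have hmN : N - t ≤ gromov (wordDist S) 1 y (w m) := (sub_le_sub_right hNm t).trans hmy
  linarith [hδ.sub_le_gromov hmN ((sub_le_sub_right hNn t).trans hny)]

theorem IsRadialSequence.le_boundaryFilter (hw : IsRadialSequence S t F w) (hS : Generates S)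
    (hδ : IsHyperbolicWith (wordDist S) δ) [F.NeBot] : F ≤ boundaryFilter (wordDist S) w := by
  refine (hasBasis_boundaryFilter _ w).ge_iff.2 fun R _ => ?_
  have hw' := (hw.tendstoInfinity hS hδ).eventually_le_gromov (R + δ)
  obtain ⟨N, hN⟩ := exists_nat_ge (R + δ + t)
  obtain ⟨m, hm, hNm⟩ := (hw'.and (eventually_ge_atTop N)).exists
  have hNm' : (N : ℝ) ≤ m := Nat.cast_le.2 hNm
  filter_upwards [hw.eventually_le_gromov m] with y hy
  filter_upwards [hm] with n hn
  linarith [hδ.sub_le_gromov hn (by linarith : R + δ ≤ gromov (wordDist S) 1 (w m) y)]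

theorem TendstoInfinity.exists_isRadialSequence (hu : TendstoInfinity (wordDist S) u)
    (hS : Generates S) (hδ₀ : 0 ≤ δ) (hδ : IsHyperbolicWith (wordDist S) δ) :
    ∃ w, IsRadialSequence S (2 * δ) (boundaryFilter (wordDist S) u) w := by
  have hd := hS.isMetricFun_wordDist
  have hpoint : ∀ k : ℕ, ∃ w, wordLength S w = k ∧
      ∀ᶠ y in boundaryFilter (wordDist S) u, k - 2 * δ ≤ gromov (wordDist S) 1 w y := fun k => by
    obtain ⟨m, hm⟩ := (hu.eventually_le_gromov k).exists
    obtain ⟨n, hn⟩ := hm.exists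
    have hlen : k ≤ wordLength S (u m) := by
      rw [← Nat.cast_le (α := ℝ), ← hS.wordDist_one_right]
      exact hn.trans (hd.gromov_le_left 1 _ _)
    obtain ⟨w, hwk, hw⟩ := hS.exists_between hlen
    refine ⟨w, hwk, ?_⟩
    have hwm : gromov (wordDist S) 1 (u m) w = k := by
      rw [hd.gromov_comm, hd.gromov_eq_of_between hw, hS.wordDist_one_right, hwk]
    filter_upwards [eventually_boundaryFilter _ u k] with y hy
    obtain ⟨n, hmn, hny⟩ := (hm.and hy).exists
    rw [hd.gromov_comm] at hmn
    have hmy := hδ.sub_le_gromov hmn hny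
    linarith [hδ.sub_le_gromov (by linarith : k - δ ≤ gromov (wordDist S) 1 (u m) w) hmy]
  choose w hw using hpoint
  exact ⟨w, fun k => (hw k).1, fun k => (hw k).2⟩

theorem exists_isRadialSequence_of_le_cofinite (hS : Generates S) (F : Ultrafilter G)
    (hF : (F : Filter G) ≤ cofinite) : ∃ w, IsRadialSequence S 0 (F : Filter G) w := by
  have hd := hS.isMetricFun_wordDist
  have hpoint : ∀ k : ℕ, ∃ w ∈ {w | wordLength S w ≤ k},
      ∀ᶠ y in (F : Filter G), wordLength S w = k ∧ gromov (wordDist S) 1 w y = k := fun k => by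
    refine (Ultrafilter.eventually_exists_mem_iff (hS.finite_setOf_wordLength_le k)).1 ?_
    filter_upwards [hF (hS.finite_setOf_wordLength_le k).compl_mem_cofinite] with y hy
    have hky : k < wordLength S y := by simpa using hy
    obtain ⟨w, hwk, hw⟩ := hS.exists_between hky.le
    exact ⟨w, hwk.le, hwk,
      by rw [hd.gromov_eq_of_between hw, hS.wordDist_one_right, hwk]⟩
  choose w _ hw using hpoint
  refine ⟨w, fun k => ?_, fun k => (hw k).mono fun y hy => ?_⟩
  · exact ((hw k).exists).choose_spec.1
  · rw [hy.2, sub_zero]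

end BoundaryFilter

theorem IsHyperbolicWith.gromov_le_of_far {X : Type*} {d : X → X → ℝ} {δ t : ℝ}
    (hδ : IsHyperbolicWith d δ) (hd : IsMetricFun d) {o w x y : X}
    (hw : d w o - t ≤ gromov d o w y) (hx : d x o + t + δ < d w o) :
    gromov d w x y ≤ t + δ := by
  have hwo : gromov d w o y ≤ t := by linarith [hd.gromov_add_gromov o w y]
  have hwx : d w o - d x o ≤ gromov d w x o := by
    simp only [gromov, hd.symm o w]
    linarith [hd.triangle w x o, hd.symm w x]
  exact hδ.gromov_le_of_lt hwo (by linarith)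

/-! ### Limits of Martin kernels -/

section Kernels

variable {μ : G → ℝ} {T : Finset G} {lam : ℝ}

theorem IsSymmetricWalk.isHarmonicFn_linear_combination (W : IsSymmetricWalk μ T) {g h : G → ℝ}
    (hg : IsHarmonicFn μ g) (hh : IsHarmonicFn μ h) (a b : ℝ) :
    IsHarmonicFn μ fun x => a * g x + b * h x := by
  rw [W.isHarmonicFn_iff] at *
  intro x
  rw [hg x, hh x, Finset.mul_sum, Finset.mul_sum, ← Finset.sum_add_distrib]
  exact Finset.sum_congr rfl fun s _ => by ring

theorem HasSpectralGap.greenFn_mul_le_of_isHarmonicFn (W : HasSpectralGap μ T lam) {h : G → ℝ}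
    (hh : IsHarmonicFn μ h) (hnonneg : ∀ x, 0 ≤ h x) (w x : G) :
    greenFn μ w x * h w ≤ greenFn μ 1 1 * h x :=
  W.greenFn_mul_le_of_superharmonic hnonneg (fun x => (W.isHarmonicFn_iff.1 hh x).ge) w x

/-- A positive harmonic function, normalized at `1`, for which the Ancona inequality with constant
`C` holds along `w`: limits of Martin kernels in the direction of `w` have this property, and it
characterizes them. -/
structure IsAnconaKernel (μ : G → ℝ) (C : ℝ) (w : ℕ → G) (h : G → ℝ) : Prop where
  nonneg : ∀ x, 0 ≤ h x
  map_one : h 1 = 1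
  isHarmonicFn : IsHarmonicFn μ h
  eventually_le : ∀ x, ∀ᶠ k in atTop, h x ≤ C * (greenFn μ x (w k) * h (w k))

namespace IsAnconaKernel

variable {C : ℝ} {w : ℕ → G} {h g : G → ℝ}

theorem pos (hh : IsAnconaKernel μ C w h) (W : HasSpectralGap μ T lam) (x : G) : 0 < h x := by
  have := W.greenFn_mul_le_of_isHarmonicFn hh.isHarmonicFn hh.nonneg 1 x
  rw [hh.map_one, mul_one] at this
  exact pos_of_mul_pos_right ((W.greenFn_pos 1 x).trans_le this) (W.greenFn_pos 1 1).le

theorem mul_le_of_frequently (hh : IsAnconaKernel μ C w h) (W : HasSpectralGap μ T lam)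
    (hC : 0 < C) (hg : IsHarmonicFn μ g) (hg₀ : ∀ x, 0 ≤ g x) {t : ℝ} (ht : 0 ≤ t)
    (hfreq : ∃ᶠ k in atTop, t * h (w k) ≤ g (w k)) (x : G) :
    t * h x ≤ C * greenFn μ 1 1 * g x := by
  obtain ⟨k, hk, hx⟩ := (hfreq.and_eventually (hh.eventually_le x)).exists
  have hgreen := W.greenFn_pos x (w k)
  calc t * h x ≤ t * (C * (greenFn μ x (w k) * h (w k))) := by gcongr
    _ = C * (greenFn μ x (w k) * (t * h (w k))) := by ring
    _ ≤ C * (greenFn μ (w k) x * g (w k)) := by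
        rw [W.greenFn_comm (w k) x]
        gcongr
    _ ≤ C * (greenFn μ 1 1 * g x) :=
        mul_le_mul_of_nonneg_left (W.greenFn_mul_le_of_isHarmonicFn hg hg₀ _ _) hC.le
    _ = _ := by ring

theorem le_or_le_of_le (hh : IsAnconaKernel μ C w h) (W : HasSpectralGap μ T lam) (hC : 0 < C)
    (hg : IsHarmonicFn μ g) {m M e : ℝ} (hmM : m ≤ M) (hm : ∀ x, m * h x ≤ g x)
    (hM : ∀ x, g x ≤ M * h x) (he : (M - m) / 2 = C * greenFn μ 1 1 * e) :
    (∀ x, (m + e) * h x ≤ g x) ∨ ∀ x, g x ≤ (M - e) * h x := by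
  have hgreen : 0 < C * greenFn μ 1 1 := mul_pos hC (W.greenFn_pos 1 1)
  have ht : 0 ≤ (M - m) / 2 := by linarith
  by_cases hfreq : ∃ᶠ k in atTop, (M - m) / 2 * h (w k) ≤ 1 * g (w k) + -m * h (w k)
  · refine Or.inl fun x => ?_
    have := hh.mul_le_of_frequently W hC (W.isHarmonicFn_linear_combination hg hh.isHarmonicFn _ _)
      (fun x => by linarith [hm x]) ht hfreq x
    rw [he, mul_assoc, mul_le_mul_iff_right₀ hgreen] at this
    linarith
  · refine Or.inr fun x => ?_
    have hfreq' : ∃ᶠ k in atTop, (M - m) / 2 * h (w k) ≤ -1 * g (w k) + M * h (w k) :=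
      (not_frequently.1 hfreq).frequently.mono fun k hk => by linarith
    have := hh.mul_le_of_frequently W hC (W.isHarmonicFn_linear_combination hg hh.isHarmonicFn _ _)
      (fun x => by linarith [hM x]) ht hfreq' x
    rw [he, mul_assoc, mul_le_mul_iff_right₀ hgreen] at this
    linarith

-- If `m` and `M` are the optimal constants in `m * h ≤ g ≤ M * h`, one of them could be improved
-- as long as `m < M`.
theorem isMinimalHarmonic (hh : IsAnconaKernel μ C w h) (W : HasSpectralGap μ T lam) (hC : 0 < C) :
    IsMinimalHarmonic μ h := by
  refine ⟨hh.isHarmonicFn, hh.pos W, fun g hg hg₀ hgh => ?_⟩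
  let X : Set ℝ := {t | ∀ x, t * h x ≤ g x}
  let Y : Set ℝ := {t | ∀ x, g x ≤ t * h x}
  have hX : IsClosed X := by
    simp only [X, ofPred_forall]
    exact isClosed_iInter fun x => isClosed_le (by fun_prop) (by fun_prop)
  have hY : IsClosed Y := by
    simp only [Y, ofPred_forall]
    exact isClosed_iInter fun x => isClosed_le (by fun_prop) (by fun_prop)
  have hX₀ : (0 : ℝ) ∈ X := fun x => by simpa using hg₀ x
  have hY₁ : (1 : ℝ) ∈ Y := fun x => by simpa using hgh x
  have hXY : ∀ t ∈ X, ∀ t' ∈ Y, t ≤ t' := fun t ht t' ht' =>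
    le_of_mul_le_mul_right ((ht 1).trans (ht' 1)) (hh.pos W 1)
  have hXb : BddAbove X := ⟨1, fun t ht => hXY t ht 1 hY₁⟩
  have hYb : BddBelow Y := ⟨0, fun t ht => hXY 0 hX₀ t ht⟩
  have hm : sSup X ∈ X := hX.csSup_mem ⟨0, hX₀⟩ hXb
  have hM : sInf Y ∈ Y := hY.csInf_mem ⟨1, hY₁⟩ hYb
  suffices h : sInf Y ≤ sSup X from
    ⟨sSup X, funext fun x => le_antisymm
      ((hM x).trans (mul_le_mul_of_nonneg_right h (hh.nonneg x))) (hm x)⟩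
  by_contra! hlt
  have hgreen : 0 < C * greenFn μ 1 1 := mul_pos hC (W.greenFn_pos 1 1)
  have he : 0 < (sInf Y - sSup X) / 2 / (C * greenFn μ 1 1) :=
    div_pos (half_pos (sub_pos.2 hlt)) hgreen
  rcases hh.le_or_le_of_le W hC hg hlt.le hm hM (mul_div_cancel₀ _ hgreen.ne').symm with h | h
  · linarith [le_csSup hXb h]
  · linarith [csInf_le hYb h]

theorem le_mul (hh : IsAnconaKernel μ C w h) (hg : IsAnconaKernel μ C w g)
    (W : HasSpectralGap μ T lam) (hC : 0 < C) (x : G) :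
    h x ≤ (C * greenFn μ 1 1) ^ 2 * g x := by
  have hgreen := W.greenFn_pos
  have hfreq : ∀ᶠ k in atTop, (C * greenFn μ 1 1)⁻¹ * h (w k) ≤ g (w k) := by
    filter_upwards [hg.eventually_le 1] with k hk
    have := W.greenFn_mul_le_of_isHarmonicFn hh.isHarmonicFn hh.nonneg (w k) 1
    rw [hh.map_one, mul_one, W.greenFn_comm] at this
    rw [hg.map_one] at hk
    rw [inv_mul_le_iff₀ (mul_pos hC (hgreen 1 1)), ← mul_le_mul_iff_right₀ (hgreen 1 (w k))]
    calc _ ≤ greenFn μ 1 1 * 1 := this.trans_eq (mul_one _).symm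
      _ ≤ greenFn μ 1 1 * (C * (greenFn μ 1 (w k) * g (w k))) := by gcongr; exact (hgreen 1 1).le
      _ = _ := by ring
  have := hh.mul_le_of_frequently W hC hg.isHarmonicFn hg.nonneg
    (inv_pos.2 (mul_pos hC (hgreen 1 1))).le hfreq.frequently x
  rwa [inv_mul_le_iff₀ (mul_pos hC (hgreen 1 1)), ← mul_assoc, ← sq] at this

theorem eq (hh : IsAnconaKernel μ C w h) (hg : IsAnconaKernel μ C w g)
    (W : HasSpectralGap μ T lam) (hC : 0 < C) : h = g := by
  set D := (C * greenFn μ 1 1) ^ 2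
  have hD : 0 < D := pow_pos (mul_pos hC (W.greenFn_pos 1 1)) 2
  obtain ⟨c, hc⟩ := (hg.isMinimalHarmonic W hC).2.2 (fun x => D⁻¹ * h x + 0 * h x)
    (W.isHarmonicFn_linear_combination hh.isHarmonicFn hh.isHarmonicFn _ _)
    (fun x => by have := hh.nonneg x; positivity) fun x => by
      rw [zero_mul, add_zero, inv_mul_le_iff₀ hD]
      exact hh.le_mul hg W hC x
  simp only [zero_mul, add_zero, funext_iff] at hc
  have hc₁ := hc 1
  rw [hh.map_one, hg.map_one, mul_one, mul_one] at hc₁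
  exact funext fun x => mul_left_cancel₀ (inv_pos.2 hD).ne' (by rw [hc x, hc₁])

end IsAnconaKernel
end Kernels

section MartinKernels

variable {μ : G → ℝ} {T : Finset G} {lam : ℝ}

namespace HasSpectralGap

theorem martinMap_one (W : HasSpectralGap μ T lam) (y : G) : martinMap μ y 1 = 1 :=
  div_self (W.greenFn_pos 1 y).ne'

theorem martinMap_nonneg (W : HasSpectralGap μ T lam) (y x : G) : 0 ≤ martinMap μ y x :=
  (div_pos (W.greenFn_pos x y) (W.greenFn_pos 1 y)).le

theorem martinMap_eq_add_sum [DecidableEq G] (W : HasSpectralGap μ T lam) (y x : G) :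
    martinMap μ y x =
      (if y = x then 1 else 0) / greenFn μ 1 y + ∑ s ∈ T, μ s * martinMap μ y (x * s) := by
  simp only [martinMap, martinKernel, mul_div_assoc', W.greenFn_comm _ y, ← Finset.sum_div]
  rw [← add_div, ← W.greenFn_eq_add_sum]

theorem not_isHarmonicFn_martinMap (W : HasSpectralGap μ T lam) (y : G) :
    ¬ IsHarmonicFn μ (martinMap μ y) := fun hy => by
  classical
  have hdefect := W.martinMap_eq_add_sum y y
  rw [← W.isHarmonicFn_iff.1 hy y, if_pos rfl, right_eq_add] at hdefect
  exact (one_div_pos.2 (W.greenFn_pos 1 y)).ne' hdefect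

theorem isHarmonicFn_of_tendsto (W : HasSpectralGap μ T lam) {F : Filter G} [F.NeBot]
    (hF : ∀ x, ∀ᶠ y in F, y ≠ x) {h : G → ℝ} (hh : Tendsto (martinMap μ) F (𝓝 h)) :
    IsHarmonicFn μ h := by
  classical
  rw [tendsto_pi_nhds] at hh
  refine W.isHarmonicFn_iff.2 fun x => tendsto_nhds_unique (hh x) ?_
  refine (tendsto_finsetSum T fun s _ => (hh (x * s)).const_mul (μ s)).congr' ?_
  filter_upwards [hF x] with y hy
  rw [W.martinMap_eq_add_sum y x, if_neg hy, zero_div, zero_add]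

theorem exists_tendsto_martinMap (W : HasSpectralGap μ T lam) {S : Finset G} (hS : Generates S)
    (F : Ultrafilter G) : ∃ h, Tendsto (martinMap μ) F (𝓝 h) := by
  obtain ⟨Λ, -, hΛ⟩ := W.exists_harnack hS
  have hcompact : IsCompact (univ.pi fun x : G => Icc (0 : ℝ) (Λ ^ wordLength S (x⁻¹ * 1))) :=
    isCompact_univ_pi fun _ => isCompact_Icc
  obtain ⟨h, -, hh⟩ := hcompact.ultrafilter_le_nhds (F.map (martinMap μ)) <|
    le_principal_iff.2 <| Ultrafilter.mem_map.2 <| univ_mem' fun y x _ =>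
      ⟨W.martinMap_nonneg y x, (div_le_iff₀ (W.greenFn_pos 1 y)).2 (hΛ x 1 y)⟩
  exact ⟨h, hh⟩

theorem isAnconaKernel_of_tendsto (W : HasSpectralGap μ T lam) {C : ℝ} {w : ℕ → G}
    {F : Filter G} [F.NeBot] (hF : ∀ x, ∀ᶠ y in F, y ≠ x)
    (hancona : ∀ x, ∀ᶠ k in atTop, ∀ᶠ y in F,
      greenFn μ x y ≤ C * (greenFn μ x (w k) * greenFn μ (w k) y))
    {h : G → ℝ} (hh : Tendsto (martinMap μ) F (𝓝 h)) : IsAnconaKernel μ C w h where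
  nonneg x := ge_of_tendsto' (tendsto_pi_nhds.1 hh x) fun y => W.martinMap_nonneg y x
  map_one := by
    simpa only [W.martinMap_one, tendsto_const_nhds_iff, eq_comm] using tendsto_pi_nhds.1 hh 1
  isHarmonicFn := W.isHarmonicFn_of_tendsto hF hh
  eventually_le x := by
    rw [tendsto_pi_nhds] at hh
    filter_upwards [hancona x] with k hk
    refine le_of_tendsto_of_tendsto (hh x) (((hh (w k)).const_mul _).const_mul C) ?_
    filter_upwards [hk] with y hy
    rw [martinMap, martinKernel, martinMap, martinKernel, ← mul_div_assoc, ← mul_div_assoc]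
    exact div_le_div_of_nonneg_right hy (W.greenFn_pos 1 y).le

theorem exists_isAnconaKernel (W : HasSpectralGap μ T lam) {S : Finset G} (hS : Generates S)
    {δ : ℝ} (hδ₀ : 0 ≤ δ) (hδ : IsHyperbolicWith (wordDist S) δ) :
    ∃ C, 0 < C ∧ ∀ u, TendstoInfinity (wordDist S) u → ∃ h w,
      Tendsto (martinMap μ) (boundaryFilter (wordDist S) u) (𝓝 h) ∧
      IsRadialSequence S (2 * δ) (boundaryFilter (wordDist S) u) w ∧ IsAnconaKernel μ C w h := by
  have hd := hS.isMetricFun_wordDist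
  obtain ⟨C, hC, hle⟩ := W.exists_ancona hS hδ (3 * δ)
  refine ⟨C, hC, fun u hu => ?_⟩
  obtain ⟨w, hw⟩ := hu.exists_isRadialSequence hS hδ₀ hδ
  have hancona : ∀ x, ∀ᶠ k in atTop, ∀ᶠ y in boundaryFilter (wordDist S) u,
      greenFn μ x y ≤ C * (greenFn μ x (w k) * greenFn μ (w k) y) := fun x => by
    obtain ⟨K, hK⟩ := exists_nat_gt (wordDist S x 1 + 2 * δ + δ)
    filter_upwards [eventually_ge_atTop K] with k hk
    have hKk : (K : ℝ) ≤ k := Nat.cast_le.2 hk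
    have hwk : wordDist S (w k) 1 = k := by rw [hS.wordDist_one_right, hw.wordLength_eq]
    filter_upwards [hw.eventually_le_gromov k] with y hy
    refine hle (w k) x y ?_
    linarith [hδ.gromov_le_of_far hd (hwk.symm ▸ hy) (hwk.symm ▸ hK.trans_le hKk)]
  have hkernel : ∀ (F : Ultrafilter G) h, ↑F ≤ boundaryFilter (wordDist S) u →
      Tendsto (martinMap μ) F (𝓝 h) → IsAnconaKernel μ C w h := fun F h hF =>
    W.isAnconaKernel_of_tendsto (fun x => hF (eventually_boundaryFilter_ne hd u x))
      fun x => (hancona x).mono fun k hk => hF hk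
  have := hu.neBot_boundaryFilter hδ
  have hof := Ultrafilter.of_le (boundaryFilter (wordDist S) u)
  obtain ⟨h, hh⟩ := W.exists_tendsto_martinMap hS (Ultrafilter.of (boundaryFilter (wordDist S) u))
  refine ⟨h, w, tendsto_iff_ultrafilter _ _ _ |>.2 fun F hF => ?_, hw, hkernel _ h hof hh⟩
  obtain ⟨h', hh'⟩ := W.exists_tendsto_martinMap hS F
  rwa [(hkernel F h' hF hh').eq (hkernel _ h hof hh) W hC] at hh'

end HasSpectralGap
end MartinKernels

/-! ### Visual metrics -/

section VisualMetric

variable {d : G → G → ℝ} {δ : ℝ} {u v : ℕ → G}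

theorem eventually_le_gromov_of_lt_seqGromov (hd : IsMetricFun d) {R : ℝ}
    (h : R < seqGromov d u v) : ∀ᶠ n in atTop, R ≤ gromov d 1 (u n) (v n) :=
  (eventually_lt_of_lt_liminf h <| isBoundedUnder_of
    ⟨0, fun n => hd.gromov_nonneg 1 (u n) (v n)⟩).mono fun _ => le_of_lt

theorem frequently_gromov_lt_of_seqGromov_lt
    (hu : ¬ Tendsto (fun n => gromov d 1 (u n) (v n)) atTop atTop) {R : ℝ}
    (h : seqGromov d u v < R) : ∃ᶠ n in atTop, gromov d 1 (u n) (v n) < R := by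
  obtain ⟨a, ha⟩ := not_forall.1 (mt Filter.tendsto_atTop.2 hu)
  refine frequently_lt_of_liminf_lt (IsCoboundedUnder.of_frequently_le (a := a) ?_) h
  exact (not_eventually.1 ha).mono fun n hn => (not_le.1 hn).le

theorem eventually_boundaryFilter_gromov_lt (hd : IsMetricFun d) (hδ : IsHyperbolicWith d δ)
    {R : ℝ} {x : G} (huv : ∃ᶠ n in atTop, gromov d 1 (u n) (v n) < R)
    (hx : ∀ᶠ n in atTop, R + 2 * δ ≤ gromov d 1 x (u n)) :
    ∀ᶠ y in boundaryFilter d v, gromov d 1 x y < R + 2 * δ := by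
  filter_upwards [eventually_boundaryFilter d v (R + δ)] with y hy
  by_contra! hxy
  obtain ⟨n, hn, hxn, hyn⟩ := (huv.and_eventually (hx.and hy)).exists
  have huy : R + δ ≤ gromov d 1 y (u n) := by linarith [hδ.sub_le_gromov hxy hxn]
  rw [hd.gromov_comm] at hyn
  linarith [hδ.sub_le_gromov huy hyn]

variable {B : Type*} [MetricSpace B] {bd : BoundaryData G d B} {ε C : ℝ}

theorem IsVisualMetric.exists_frequently_gromov_lt (hv : IsVisualMetric d bd ε C) {η : ℝ}
    (hη : 0 < η) : ∃ R, ∀ u v b b', bd.conv u b → bd.conv v b' → η ≤ dist b b' →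
      ∃ᶠ n in atTop, gromov d 1 (u n) (v n) < R := by
  obtain ⟨hε, hC, hv⟩ := hv
  refine ⟨-Real.log (η / C) / ε + 1, fun u v b b' hu hv' hbb' => ?_⟩
  have hne : b ≠ b' := dist_pos.1 (hη.trans_le hbb')
  refine frequently_gromov_lt_of_seqGromov_lt
    (fun h => hne (bd.conv_unique v b b' ((bd.conv_iff u v b hu).2 h) hv')) ?_
  refine lt_add_of_le_of_pos ((le_div_iff₀ hε).2 ?_) one_pos
  have hexp : η / C ≤ Real.exp (-ε * seqGromov d u v) :=
    (div_le_iff₀' hC).2 (hbb'.trans (hv u v b b' hu hv' hne).1)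
  linarith [(Real.log_le_iff_le_exp (div_pos hη hC)).2 hexp]

theorem IsVisualMetric.eventually_nhds (hv : IsVisualMetric d bd ε C) (hd : IsMetricFun d)
    {b : B} (hu : bd.conv u b) (R : ℝ) :
    ∀ᶠ b' in 𝓝 b, ∀ v, bd.conv v b' → ∀ᶠ n in atTop, R ≤ gromov d 1 (u n) (v n) := by
  obtain ⟨hε, hC, hv⟩ := hv
  filter_upwards [Metric.ball_mem_nhds b (div_pos (Real.exp_pos (-ε * R)) hC)] with b' hb' v hvb'
  rcases eq_or_ne b b' with rfl | hne
  · exact ((bd.conv_iff u v b hu).1 hvb').eventually_ge_atTop R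
  rw [Metric.mem_ball', lt_div_iff₀' hC] at hb'
  have hexp := (hv u v b b' hu hvb' hne).2.trans_lt hb'
  rw [Real.exp_lt_exp, neg_mul, neg_mul, neg_lt_neg_iff, mul_lt_mul_iff_right₀ hε] at hexp
  exact eventually_le_gromov_of_lt_seqGromov hd hexp

end VisualMetric

/-! ### Extension of the Martin embedding to the Gromov boundary -/

theorem exists_ultrafilter_tendsto_of_mem_closure_range {α X : Type*} [TopologicalSpace X]
    [T2Space X] {f : α → X} {k : X} (hk : k ∈ closure (range f)) (hk' : k ∉ range f) :
    ∃ F : Ultrafilter α, (F : Filter α) ≤ cofinite ∧ Tendsto f F (𝓝 k) := by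
  have : (comap f (𝓝 k)).NeBot := by
    rw [comap_neBot_iff_frequently]
    exact mem_closure_iff_frequently.1 hk
  have hF : Tendsto f (Ultrafilter.of (comap f (𝓝 k))) (𝓝 k) :=
    tendsto_iff_comap.2 (Ultrafilter.of_le _)
  refine ⟨_, (Ultrafilter.le_cofinite_or_eq_pure _).resolve_right ?_, hF⟩
  rintro ⟨a, ha⟩
  rw [ha] at hF
  exact hk' ⟨a, tendsto_nhds_unique (tendsto_pure_nhds f a) hF⟩

theorem isEmbedding_of_forall_exists_lt {B X : Type*} [MetricSpace B] {Φ : B → X → ℝ}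
    (hΦ : Continuous Φ) (hsep : ∀ b η, 0 < η →
      ∃ x t, t < Φ b x ∧ ∀ b', η ≤ dist b b' → Φ b' x ≤ t) : IsEmbedding Φ := by
  refine (isInducing_iff_nhds.2 fun b => le_antisymm (hΦ.tendsto b).le_comap ?_).isEmbedding
  refine Metric.nhds_basis_ball.ge_iff.2 fun η hη => ?_
  obtain ⟨x, t, ht, hle⟩ := hsep b η hη
  filter_upwards [((continuous_apply x).tendsto (Φ b)).eventually_const_lt ht |>.comap Φ]
    with b' hb'
  rw [Metric.mem_ball']
  exact not_le.1 fun h => (hle b' h).not_gt hb'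

section MartinExtension

variable {B : Type*} {S : Finset G} {μ : G → ℝ} {T : Finset G} {lam δ : ℝ}

/-- `Φ` extends the map `martinMap μ` continuously to the Gromov boundary, its values being
Ancona kernels with constant `C` along `t`-radial sequences. -/
structure IsMartinExtension (μ : G → ℝ) (bd : BoundaryData G (wordDist S) B) (t C : ℝ)
    (Φ : B → G → ℝ) : Prop where
  tendsto : ∀ {u b}, bd.conv u b →
    Tendsto (martinMap μ) (boundaryFilter (wordDist S) u) (𝓝 (Φ b))
  exists_isAnconaKernel : ∀ {u b}, bd.conv u b →
    ∃ w, IsRadialSequence S t (boundaryFilter (wordDist S) u) w ∧ IsAnconaKernel μ C w (Φ b)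

theorem HasSpectralGap.exists_isMartinExtension (W : HasSpectralGap μ T lam) (hS : Generates S)
    (hδ₀ : 0 ≤ δ) (hδ : IsHyperbolicWith (wordDist S) δ) (bd : BoundaryData G (wordDist S) B) :
    ∃ C, 0 < C ∧ ∃ Φ, IsMartinExtension μ bd (2 * δ) C Φ := by
  obtain ⟨C, hC, hkernel⟩ := W.exists_isAnconaKernel hS hδ₀ hδ
  choose v hv using bd.conv_surj
  choose Φ w hΦ _ _ using fun b => hkernel (v b) (bd.conv_tendstoInfinity _ b (hv b))
  have hunique : ∀ u b, bd.conv u b → ∀ h,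
      Tendsto (martinMap μ) (boundaryFilter (wordDist S) u) (𝓝 h) → h = Φ b := fun u b hu h hh =>
    tendsto_nhds_unique
      (hh.comp ((bd.conv_tendstoInfinity u b hu).tendsto_boundaryFilter hδ
        ((bd.conv_iff u (v b) b hu).1 (hv b))))
      ((hΦ b).comp ((bd.conv_tendstoInfinity _ b (hv b)).tendsto_boundaryFilter_self hδ))
  refine ⟨C, hC, Φ, fun {u b} hu => ?_, fun {u b} hu => ?_⟩ <;>
    obtain ⟨h, w, hh, hw, hhw⟩ := hkernel u (bd.conv_tendstoInfinity u b hu) <;>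
    obtain rfl := hunique u b hu h hh
  · exact hh
  · exact ⟨w, hw, hhw⟩

theorem IsRadialSequence.tendsto_greenFn {t : ℝ} {F : Filter G} {w : ℕ → G}
    (hw : IsRadialSequence S t F w) (W : HasSpectralGap μ T lam) (hS : Generates S) :
    Tendsto (fun k => greenFn μ 1 (w k)) atTop (𝓝 0) := by
  refine tendsto_order.2 ⟨fun a ha => .of_forall fun k => ha.trans (W.greenFn_pos _ _),
    fun a ha => ?_⟩
  obtain ⟨N, hN⟩ := W.exists_greenFn_le hS (half_pos ha)
  filter_upwards [eventually_ge_atTop N] with k hk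
  refine (hN 1 (w k) ?_).trans_lt (half_lt_self ha)
  rwa [inv_one, one_mul, hw.wordLength_eq]

theorem IsAnconaKernel.eventually_mul_greenFn_lt {C : ℝ} {w : ℕ → G} {h : G → ℝ}
    (hh : IsAnconaKernel μ C w h) (W : HasSpectralGap μ T lam) (hC : 0 < C)
    (hw : Tendsto (fun k => greenFn μ 1 (w k)) atTop (𝓝 0)) (A : ℝ) :
    ∀ᶠ k in atTop, A * greenFn μ (w k) 1 < h (w k) := by
  have hlim := (hw.mul hw).const_mul (C * A)
  rw [mul_zero, mul_zero] at hlim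
  filter_upwards [hh.eventually_le 1, hlim.eventually_lt_const one_pos] with k hk hk'
  rw [hh.map_one] at hk
  refine lt_of_mul_lt_mul_left ?_ (mul_pos hC (W.greenFn_pos 1 (w k))).le
  rw [W.greenFn_comm (w k) 1]
  linarith

namespace IsMartinExtension

section Boundary

variable {bd : BoundaryData G (wordDist S) B} {t C : ℝ} {Φ : B → G → ℝ}

theorem tendsto_comp (E : IsMartinExtension μ bd t C Φ) (hδ : IsHyperbolicWith (wordDist S) δ)
    {u : ℕ → G} {b : B} (hu : bd.conv u b) :
    Tendsto (fun n => martinMap μ (u n)) atTop (𝓝 (Φ b)) :=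
  (E.tendsto hu).comp ((bd.conv_tendstoInfinity u b hu).tendsto_boundaryFilter_self hδ)

theorem range_eq (E : IsMartinExtension μ bd t C Φ) (W : HasSpectralGap μ T lam)
    (hS : Generates S) (hδ : IsHyperbolicWith (wordDist S) δ) : range Φ = martinBoundary μ := by
  refine Subset.antisymm (range_subset_iff.2 fun b => ?_) fun k ⟨hk, hk'⟩ => ?_
  · obtain ⟨u, hu⟩ := bd.conv_surj b
    obtain ⟨w, -, hw⟩ := E.exists_isAnconaKernel hu
    refine ⟨mem_closure_of_tendsto (E.tendsto_comp hδ hu) (.of_forall fun n => ⟨u n, rfl⟩), ?_⟩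
    rintro ⟨y, hy⟩
    exact W.not_isHarmonicFn_martinMap y (hy ▸ hw.isHarmonicFn)
  · obtain ⟨F, hF, hFk⟩ := exists_ultrafilter_tendsto_of_mem_closure_range hk hk'
    obtain ⟨w, hw⟩ := exists_isRadialSequence_of_le_cofinite hS F hF
    obtain ⟨b, hb⟩ := bd.exists_conv w (hw.tendstoInfinity hS hδ)
    exact ⟨b, tendsto_nhds_unique ((E.tendsto hb).mono_left (hw.le_boundaryFilter hS hδ)) hFk⟩

end Boundary

variable [MetricSpace B] {bd : BoundaryData G (wordDist S) B} {t C : ℝ} {Φ : B → G → ℝ}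
  {ε D : ℝ}

theorem continuous (E : IsMartinExtension μ bd t C Φ) (hS : Generates S)
    (hδ : IsHyperbolicWith (wordDist S) δ) (hv : IsVisualMetric (wordDist S) bd ε D) :
    Continuous Φ := by
  refine continuous_iff_continuousAt.2 fun b => (closed_nhds_basis _).tendsto_right_iff.2 ?_
  rintro V ⟨hV, hVclosed⟩
  obtain ⟨u, hu⟩ := bd.conv_surj b
  have hu' := bd.conv_tendstoInfinity u b hu
  obtain ⟨R, -, hR⟩ := (hasBasis_boundaryFilter _ u).mem_iff.1 (E.tendsto hu hV)
  filter_upwards [hv.eventually_nhds hS.isMetricFun_wordDist hu (R + δ)] with b' hb'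
  obtain ⟨v, hvb'⟩ := bd.conv_surj b'
  exact hVclosed.mem_of_tendsto (E.tendsto_comp hδ hvb') <|
    (hu'.eventually_le_gromov_of_eventually hδ (hb' v hvb')).mono fun m hm => hR hm

theorem exists_forall_le (E : IsMartinExtension μ bd t C Φ) (W : HasSpectralGap μ T lam)
    (hS : Generates S) (hδ : IsHyperbolicWith (wordDist S) δ) (hC : 0 < C)
    (hv : IsVisualMetric (wordDist S) bd ε D) (b : B) {η : ℝ} (hη : 0 < η) :
    ∃ x r, r < Φ b x ∧ ∀ b', η ≤ dist b b' → Φ b' x ≤ r := by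
  obtain ⟨R, hR⟩ := hv.exists_frequently_gromov_lt hη
  obtain ⟨A, -, hA⟩ := W.exists_ancona hS hδ (R + 2 * δ)
  obtain ⟨u, hu⟩ := bd.conv_surj b
  obtain ⟨w, hw, hΦ⟩ := E.exists_isAnconaKernel hu
  obtain ⟨N, hN⟩ := exists_nat_ge (R + 2 * δ + t)
  obtain ⟨k, hlt, hk⟩ := ((hΦ.eventually_mul_greenFn_lt W hC (hw.tendsto_greenFn W hS) A).and
    (eventually_ge_atTop N)).exists
  have hNk : (N : ℝ) ≤ k := Nat.cast_le.2 hk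
  have hwu : ∀ᶠ n in atTop, R + 2 * δ ≤ gromov (wordDist S) 1 (w k) (u n) :=
    (((bd.conv_tendstoInfinity u b hu).tendsto_boundaryFilter_self hδ).eventually
      (hw.eventually_le_gromov k)).mono fun n hn => by linarith
  refine ⟨w k, A * greenFn μ (w k) 1, hlt, fun b' hb' => ?_⟩
  obtain ⟨v, hvb'⟩ := bd.conv_surj b'
  have := (bd.conv_tendstoInfinity v b' hvb').neBot_boundaryFilter hδ
  refine le_of_tendsto (tendsto_pi_nhds.1 (E.tendsto hvb') (w k)) ?_
  filter_upwards [eventually_boundaryFilter_gromov_lt hS.isMetricFun_wordDist hδ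
    (hR u v b b' hu hvb' hb') hwu] with y hy
  refine (div_le_iff₀ (W.greenFn_pos 1 y)).2 ?_
  rw [mul_assoc]
  exact hA 1 (w k) y hy.le

theorem isEmbedding (E : IsMartinExtension μ bd t C Φ) (W : HasSpectralGap μ T lam)
    (hS : Generates S) (hδ : IsHyperbolicWith (wordDist S) δ) (hC : 0 < C)
    (hv : IsVisualMetric (wordDist S) bd ε D) : IsEmbedding Φ :=
  isEmbedding_of_forall_exists_lt (E.continuous hS hδ hv) fun b _ hη =>
    E.exists_forall_le W hS hδ hC hv b hη

end IsMartinExtension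
end MartinExtension

theorem ancona_martin_boundary_general {G : Type*} [Group G] [Infinite G] {S : Finset G}
    (hS : Generates S) (hhyp : IsHyperbolic (wordDist S))
    (hZ : ¬ QuasiIsometric (wordDist S) intDist) {μ : G → ℝ} (hprob : IsProbDensity μ)
    (hsymm : IsSymmetric μ) (hfin : {g : G | μ g ≠ 0}.Finite) (hgen : GeneratesSupp μ)
    {B : Type*} [MetricSpace B] {bd : BoundaryData G (wordDist S) B} {ε D : ℝ}
    (hv : IsVisualMetric (wordDist S) bd ε D) : Nonempty (martinBoundary μ ≃ₜ B) := by
  obtain ⟨T, W₀⟩ := exists_isSymmetricWalk hprob hsymm hfin hgen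
  obtain ⟨lam, W⟩ := W₀.exists_hasSpectralGap hS hhyp hZ
  obtain ⟨δ, hδ₀, hδ⟩ := hhyp
  obtain ⟨C, hC, Φ, E⟩ := W.exists_isMartinExtension hS hδ₀ hδ bd
  have hΦ : IsEmbedding Φ := E.isEmbedding W hS hδ hC hv
  exact ⟨(hΦ.toHomeomorph.trans (.setCongr (E.range_eq W hS hδ))).symm⟩

/-- **Corollary 1.8 (Ancona).**  For a finitely supported symmetric probability measure
whose support generates a non-elementary hyperbolic group, the Martin boundary is
homeomorphic to the hyperbolic (Gromov) boundary of the group. -/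
theorem ancona_martin_boundary
    {G : Type*} [Group G] (hG : NonElemHyperbolic G)
    (μ : G → ℝ) (hprob : IsProbDensity μ) (hsymm : IsSymmetric μ)
    (hfin : {g : G | μ g ≠ 0}.Finite) (hgen : GeneratesSupp μ) :
    ∀ (S : Finset G), Generates S →
      ∀ (B : Type) [MetricSpace B],
        ∀ (bd : BoundaryData G (wordDist S) B) (ε C : ℝ),
          IsVisualMetric (wordDist S) bd ε C →
          Nonempty (↥(martinBoundary μ) ≃ₜ B) := by
  intro S hS B _ bd ε C hv
  have := hG.1
  exact ancona_martin_boundary_general hS (hG.2.2 S hS).1 (hG.2.2 S hS).2 hprob hsymm hfin hgen hv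

end GHM
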